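/- arXiv:1305.1979 — 2 statements merged into one kernel-verified Lean document; each statement's English description precedes it below -/
import Mathlib

section
/- Any two projection games G and H satisfy ‖G ⊗ H‖² ≤ φ(‖G‖²) · ‖H‖², where φ(x) = 2√x/(1+x) and ‖·‖ denotes the collision value. -/
open Finset

/-- A projection game: finite nonempty question sets `Q1` (Alice) and `Q2` (Bob),
a finite nonempty alphabet `A`, and a probability mass function `μ` on triples
`(u, v, π)` where `π : A → Option A` encodes a projection constraint
(the answer pair `(α, β)` satisfies `π` iff `π β = some α`). -/
structure ProjGame where
  Q1 : Type
  Q2 : Type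
  A : Type
  [fQ1 : Fintype Q1]
  [fQ2 : Fintype Q2]
  [fA : Fintype A]
  [neQ1 : Nonempty Q1]
  [neQ2 : Nonempty Q2]
  [neA : Nonempty A]
  [dQ1 : DecidableEq Q1]
  [dQ2 : DecidableEq Q2]
  [dA : DecidableEq A]
  μ : Q1 × Q2 × (A → Option A) → ℝ
  μ_nonneg : ∀ x, 0 ≤ μ x
  μ_sum : ∑ x, μ x = 1

attribute [instance] ProjGame.fQ1 ProjGame.fQ2 ProjGame.fA
  ProjGame.neQ1 ProjGame.neQ2 ProjGame.neA ProjGame.dQ1 ProjGame.dQ2 ProjGame.dA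

namespace ProjGame

variable (G : ProjGame)

/-- The `U`-marginal (Alice-side marginal) of `μ`. -/
noncomputable def wU (u : G.Q1) : ℝ := ∑ v, ∑ π, G.μ (u, v, π)

/-- The `V`-marginal (Bob-side marginal) of `μ`. -/
noncomputable def wV (v : G.Q2) : ℝ := ∑ u, ∑ π, G.μ (u, v, π)

/-- The game operator: `(Gf)(u,α) = E_{(v,π)|u} [∑_{β : π β = some α} f (v,β)]`. -/
noncomputable def op (f : G.Q2 × G.A → ℝ) : G.Q1 × G.A → ℝ :=
  fun p =>
    (∑ v, ∑ π, G.μ (p.1, v, π) * ∑ β, if π β = some p.2 then f (v, β) else 0) / G.wU p.1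

/-- Squared norm on functions on `U × Σ`: `‖g‖² = E_u [∑_α g(u,α)²]`. -/
noncomputable def normUsq (g : G.Q1 × G.A → ℝ) : ℝ := ∑ u, G.wU u * ∑ α, (g (u, α)) ^ 2

/-- Squared norm on functions on `V × Σ`: `‖f‖² = E_v [∑_β f(v,β)²]`. -/
noncomputable def normVsq (f : G.Q2 × G.A → ℝ) : ℝ := ∑ v, G.wV v * ∑ β, (f (v, β)) ^ 2

/-- Inner product `⟨g, g'⟩ = E_u [∑_α g(u,α) g'(u,α)]`. -/
noncomputable def inn (g g' : G.Q1 × G.A → ℝ) : ℝ :=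
  ∑ u, G.wU u * ∑ α, g (u, α) * g' (u, α)

/-- An assignment for Bob. -/
def IsBob (f : G.Q2 × G.A → ℝ) : Prop := (∀ p, 0 ≤ f p) ∧ ∀ v, ∑ β, f (v, β) = 1

/-- An assignment for Alice. -/
def IsAlice (g : G.Q1 × G.A → ℝ) : Prop := (∀ p, 0 ≤ g p) ∧ ∀ u, ∑ α, g (u, α) = 1

/-- The value of the game: `val(G) = max ⟨g, Gf⟩` over assignments. -/
noncomputable def val : ℝ :=
  sSup { x | ∃ f g, G.IsBob f ∧ G.IsAlice g ∧ x = G.inn g (G.op f) }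

/-- The collision value `‖G‖ = max_f ‖Gf‖` over assignments `f` for Bob. -/
noncomputable def collVal : ℝ :=
  sSup { x | ∃ f, G.IsBob f ∧ x = Real.sqrt (G.normUsq (G.op f)) }

/-- Product of projection constraints. -/
def tensorC {A A' : Type} (π : A → Option A) (π' : A' → Option A') :
    A × A' → Option (A × A') :=
  fun b => (π b.1).bind fun a => (π' b.2).map fun a' => (a, a')

/-- The product (parallel repetition) of two projection games. -/
noncomputable def tensor (G H : ProjGame) : ProjGame where
  Q1 := G.Q1 × H.Q1
  Q2 := G.Q2 × H.Q2
  A := G.A × H.A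
  μ := fun x =>
    ∑ y : (G.Q1 × G.Q2 × (G.A → Option G.A)) × (H.Q1 × H.Q2 × (H.A → Option H.A)),
      if ((y.1.1, y.2.1), (y.1.2.1, y.2.2.1), tensorC y.1.2.2 y.2.2.2) = x
      then G.μ y.1 * H.μ y.2 else 0
  μ_nonneg := by
    intro x
    refine Finset.sum_nonneg fun y _ => ?_
    split
    · exact mul_nonneg (G.μ_nonneg _) (H.μ_nonneg _)
    · exact le_refl 0
  μ_sum := by
    rw [Finset.sum_comm]
    simp only [Finset.sum_ite_eq, Finset.mem_univ, if_true]
    rw [Fintype.sum_prod_type]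
    calc (∑ y1, ∑ y2, G.μ y1 * H.μ y2)
        = (∑ y1, G.μ y1) * (∑ y2, H.μ y2) := by rw [Finset.sum_mul_sum]
      _ = 1 := by rw [G.μ_sum, H.μ_sum, mul_one]

/-- `G.iterTensor k` is the `(k+1)`-fold parallel repetition `G^{⊗(k+1)}`. -/
noncomputable def iterTensor (G : ProjGame) : ℕ → ProjGame
  | 0 => G
  | n + 1 => G.tensor (G.iterTensor n)

/-- `val₊(G)`: supremum of values of vector assignments. -/
noncomputable def valPlus (G : ProjGame) : ℝ :=
  sSup { x | ∃ n : ℕ, 0 < n ∧ ∃ f : G.Q2 × G.A → Fin n → ℝ,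
    (∀ p i, 0 ≤ f p i) ∧
    (∀ v, Real.sqrt (∑ i, (∑ β, f (v, β) i) ^ 2) ≤ 1) ∧
    x = Real.sqrt (∑ u, G.wU u * ∑ α, ∑ i, (G.op (fun q => f q i) (u, α)) ^ 2) }

/-- `‖Th‖² = E_v [(∑_β h(v,β))²]`. -/
noncomputable def Tnormsq (G : ProjGame) (h : G.Q2 × G.A → ℝ) : ℝ :=
  ∑ v, G.wV v * (∑ β, h (v, β)) ^ 2

/-- `λ₊(G)`: supremum of `‖Gh‖/‖Th‖` over nonnegative `h` with `‖Th‖ > 0`. -/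
noncomputable def lambdaPlus (G : ProjGame) : ℝ :=
  sSup { x | ∃ h : G.Q2 × G.A → ℝ, (∀ p, 0 ≤ h p) ∧
    0 < Real.sqrt (G.Tnormsq h) ∧
    x = Real.sqrt (G.normUsq (G.op h)) / Real.sqrt (G.Tnormsq h) }

/-- The symmetrized distribution on `V × V` (with the constraints marginalized out). -/
noncomputable def msym (G : ProjGame) (v v' : G.Q2) : ℝ :=
  ∑ u, ((∑ π, G.μ (u, v, π)) * (∑ π', G.μ (u, v', π'))) / G.wU u

/-- `G` is `γ`-expanding: the Markov operator of the symmetrized constraint graph has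
spectral gap at least `γ`, i.e. `|⟨x, Ax⟩| ≤ (1-γ) E_v[x(v)²]` for mean-zero `x`. -/
def IsExpanding (G : ProjGame) (γ : ℝ) : Prop :=
  ∀ x : G.Q2 → ℝ, (∑ v, G.wV v * x v) = 0 →
    |∑ v, ∑ v', G.msym v v' * x v * x v'| ≤ (1 - γ) * ∑ v, G.wV v * (x v) ^ 2

/-- The symmetrized distribution on `(v, v', π, π')`. -/
noncomputable def msymFull (G : ProjGame) (v v' : G.Q2) (π π' : G.A → Option G.A) : ℝ :=
  ∑ u, (G.μ (u, v, π) * G.μ (u, v', π')) / G.wU u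

/-- The value of the assignment `x` in the symmetrized game `G_sym`. -/
noncomputable def symValAssign (G : ProjGame) (x : G.Q2 → G.A) : ℝ :=
  ∑ v, ∑ v', ∑ π, ∑ π', G.msymFull v v' π π' *
    (if ∃ α, π (x v) = some α ∧ π' (x v') = some α then 1 else 0)

/-- The value of the symmetrized game `G_sym`. -/
noncomputable def symVal (G : ProjGame) : ℝ :=
  sSup { r | ∃ x : G.Q2 → G.A, r = G.symValAssign x }

end ProjGame

theorem aux_thresh {V : Type*} [Fintype V] [DecidableEq V] (n : ℕ) :
    ∀ a : V → ℝ, (∀ v, 0 ≤ a v) → (Finset.univ.filter (fun v => a v ≠ 0)).card = n →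
    ∃ W : Finset V → ℝ, (∀ S, 0 ≤ W S) ∧ ∀ v v',
      ∑ S, W S * ((if v ∈ S then 1 else 0) * (if v' ∈ S then 1 else 0)) = min (a v) (a v') := by
  induction n using Nat.strong_induction_on with
  | _ n ih =>
    intro a ha hn
    set S0 := Finset.univ.filter (fun v => a v ≠ 0) with hS0
    have mem : ∀ v, v ∈ S0 ↔ a v ≠ 0 := by intro v; simp [hS0]
    by_cases hne : S0.Nonempty
    · obtain ⟨x, hx, hmin⟩ := Finset.exists_min_image S0 a hne
      have hxpos : 0 < a x := lt_of_le_of_ne (ha x) (Ne.symm ((mem x).1 hx))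
      let a' : V → ℝ := fun v => a v - a x * (if v ∈ S0 then 1 else 0)
      have ha' : ∀ v, 0 ≤ a' v := by
        intro v
        by_cases hv : v ∈ S0
        · have := hmin v hv
          simp [a', hv, this]
        · simp [a', hv, ha v]
      have hlt : (Finset.univ.filter (fun v => a' v ≠ 0)).card < n := by
        rw [← hn]
        apply Finset.card_lt_card
        rw [Finset.ssubset_iff_of_subset]
        · exact ⟨x, hx, by simp [a', hx]⟩
        · intro v hv
          by_contra hv0
          have h0 : a v = 0 := by
            by_contra h; exact hv0 ((mem v).2 h)
          simp [a', hv0, h0] at hv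
      obtain ⟨W, hW, hWs⟩ := ih _ hlt a' ha' rfl
      refine ⟨fun S => W S + if S = S0 then a x else 0, ?_, ?_⟩
      · intro S
        have := hW S
        show 0 ≤ W S + if S = S0 then a x else 0
        split_ifs <;> linarith
      · intro v v'
        simp only [add_mul, Finset.sum_add_distrib, hWs]
        simp only [ite_mul, zero_mul, Finset.sum_ite_eq', Finset.mem_univ, if_true]
        by_cases hv : v ∈ S0
        · by_cases hv' : v' ∈ S0
          · simp [a', hv, hv', min_sub_sub_right]
          · have h0 : a v' = 0 := by
              by_contra h; exact hv' ((mem v').2 h)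
            have := hmin v hv
            simp [a', hv, hv', h0, ha v, this]
        · have h0 : a v = 0 := by
            by_contra h; exact hv ((mem v).2 h)
          by_cases hv' : v' ∈ S0
          · have := hmin v' hv'
            simp [a', hv, hv', h0, ha v', this]
          · simp [a', hv, hv']
    · refine ⟨fun _ => 0, fun _ => le_refl _, ?_⟩
      intro v v'
      have h0 : ∀ v, a v = 0 := by
        intro v
        by_contra h; exact hne ⟨v, (mem v).2 h⟩
      simp [h0]

/-- sub-assignments -/
def IsSubA {V B : Type*} [Fintype B] (f : V × B → ℝ) : Prop :=
  (∀ p, 0 ≤ f p) ∧ ∀ v, ∑ β, f (v, β) ≤ 1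

theorem aux_step {V B Ω : Type*} [Fintype V] [Fintype B] [Fintype Ω]
    (P : Ω → ℝ) (hP : ∀ o, 0 ≤ P o) (hP1 : ∑ o, P o ≤ 1)
    (e : Ω → V → ℝ) (he1 : ∀ o v, e o v ≤ 1)
    (g : Ω → V × B → ℝ) (hg0 : ∀ o p, 0 ≤ g o p) (hg : ∀ o v, ∑ β, g o (v, β) ≤ e o v)
    (k : V × B → V × B → ℝ)
    (hk : ∀ (C : V × B → V × B → ℝ) (s : ℝ), (∀ p q, 0 ≤ C p q) →
      (∀ f, IsSubA f → ∑ p, ∑ q, C p q * (f p * f q) ≤ s) → ∑ p, ∑ q, C p q * k p q ≤ s)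
    (C : V × B → V × B → ℝ) (s : ℝ) (hC : ∀ p q, 0 ≤ C p q)
    (hs : ∀ f, IsSubA f → ∑ p, ∑ q, C p q * (f p * f q) ≤ s) :
    ∑ p, ∑ q, C p q * ((∑ o, P o * (g o p * g o q)) +
      (1 - ∑ o, P o * (e o p.1 + e o q.1 - e o p.1 * e o q.1)) * k p q) ≤ s := by
  have h1 : ∀ o, ∑ p, ∑ q, C p q * (g o p * g o q + (1 - e o p.1) * (1 - e o q.1) * k p q) ≤ s := by
    intro o
    have := hk (fun p q => C p q * ((1 - e o p.1) * (1 - e o q.1)))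
      (s - ∑ p, ∑ q, C p q * (g o p * g o q))
      (fun p q => mul_nonneg (hC p q) (mul_nonneg (by linarith [he1 o p.1]) (by linarith [he1 o q.1])))
      (by
        intro f hf
        have h2 := hs (fun p => g o p + (1 - e o p.1) * f p) (by
          constructor
          · intro p
            exact add_nonneg (hg0 o p) (mul_nonneg (by linarith [he1 o p.1]) (hf.1 p))
          · intro v
            simp only [Finset.sum_add_distrib, ← Finset.mul_sum]
            have := hg o v
            have := mul_le_mul_of_nonneg_left (hf.2 v) (show 0 ≤ 1 - e o v by linarith [he1 o v])
            linarith)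
        rw [le_sub_iff_add_le, ← Finset.sum_add_distrib]
        refine le_trans (Finset.sum_le_sum fun p _ => ?_) h2
        rw [← Finset.sum_add_distrib]
        refine Finset.sum_le_sum fun q _ => ?_
        have e1 : 0 ≤ (1 - e o p.1) * f p := mul_nonneg (by linarith [he1 o p.1]) (hf.1 p)
        have e2 : 0 ≤ (1 - e o q.1) * f q := mul_nonneg (by linarith [he1 o q.1]) (hf.1 q)
        have e3 := mul_nonneg (hC p q) (mul_nonneg e1 (hg0 o q))
        have e4 := mul_nonneg (hC p q) (mul_nonneg (hg0 o p) e2)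
        nlinarith)
    rw [le_sub_iff_add_le, ← Finset.sum_add_distrib] at this
    refine le_trans (le_of_eq (Finset.sum_congr rfl fun p _ => ?_)) this
    rw [← Finset.sum_add_distrib]
    refine Finset.sum_congr rfl fun q _ => ?_
    ring
  have h2 := hk C s hC hs
  have h3 : ∑ o, P o * (∑ p, ∑ q, C p q * (g o p * g o q + (1 - e o p.1) * (1 - e o q.1) * k p q))
      ≤ ∑ o, P o * s := Finset.sum_le_sum fun o _ => mul_le_mul_of_nonneg_left (h1 o) (hP o)
  have h4 := mul_le_mul_of_nonneg_left h2 (show 0 ≤ 1 - ∑ o, P o by linarith)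
  have h5 : ∑ p, ∑ q, C p q * ((∑ o, P o * (g o p * g o q)) +
      (1 - ∑ o, P o * (e o p.1 + e o q.1 - e o p.1 * e o q.1)) * k p q) =
      (∑ o, P o * (∑ p, ∑ q, C p q * (g o p * g o q + (1 - e o p.1) * (1 - e o q.1) * k p q)))
      + (1 - ∑ o, P o) * ∑ p, ∑ q, C p q * k p q := by
    have e1 : (∑ o, P o * (∑ p, ∑ q,
        C p q * (g o p * g o q + (1 - e o p.1) * (1 - e o q.1) * k p q))) =
        ∑ p, ∑ q, ∑ o, P o * (C p q * (g o p * g o q + (1 - e o p.1) * (1 - e o q.1) * k p q)) := by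
      simp only [Finset.mul_sum]
      rw [Finset.sum_comm]
      exact Finset.sum_congr rfl fun p _ => Finset.sum_comm
    rw [e1, Finset.mul_sum, ← Finset.sum_add_distrib]
    refine Finset.sum_congr rfl fun p _ => ?_
    rw [Finset.mul_sum, ← Finset.sum_add_distrib]
    refine Finset.sum_congr rfl fun q _ => ?_
    have : ∀ o, P o * (C p q * (g o p * g o q + (1 - e o p.1) * (1 - e o q.1) * k p q)) =
      C p q * (P o * (g o p * g o q)) + C p q * k p q * P o
        - C p q * k p q * (P o * (e o p.1 + e o q.1 - e o p.1 * e o q.1)) := by intro o; ring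
    simp only [this, Finset.sum_add_distrib, Finset.sum_sub_distrib, ← Finset.mul_sum]
    ring
  rw [h5]
  rw [← Finset.sum_mul] at h3
  linarith

theorem aux_round {V B Ω : Type*} [Fintype V] [Fintype B] [Fintype Ω]
    (P : Ω → ℝ) (hP : ∀ o, 0 ≤ P o) (hP1 : ∑ o, P o ≤ 1)
    (e : Ω → V → ℝ) (he1 : ∀ o v, e o v ≤ 1)
    (g : Ω → V × B → ℝ) (hg0 : ∀ o p, 0 ≤ g o p) (hg : ∀ o v, ∑ β, g o (v, β) ≤ e o v)
    (k : V × B → V × B → ℝ) (ρ : V → V → ℝ)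
    (hρ : ∀ v v', ρ v v' = ∑ o, P o * (e o v + e o v' - e o v * e o v'))
    (hρk : ∀ p q, ρ p.1 q.1 * k p q = ∑ o, P o * (g o p * g o q))
    (hk0 : ∀ p q, ρ p.1 q.1 = 0 → k p q = 0)
    (C : V × B → V × B → ℝ) (s : ℝ) (hC : ∀ p q, 0 ≤ C p q)
    (hs : ∀ f, IsSubA f → ∑ p, ∑ q, C p q * (f p * f q) ≤ s) :
    ∑ p, ∑ q, C p q * k p q ≤ s := by
  have he0 : ∀ o v, 0 ≤ e o v := fun o v =>
    le_trans (Finset.sum_nonneg fun β _ => hg0 o (v, β)) (hg o v)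
  have hρ0 : ∀ v v', 0 ≤ ρ v v' := by
    intro v v'
    rw [hρ]
    refine Finset.sum_nonneg fun o _ => mul_nonneg (hP o) ?_
    nlinarith [he0 o v, he0 o v', he1 o v, he1 o v']
  have hρ1 : ∀ v v', ρ v v' ≤ 1 := by
    intro v v'
    rw [hρ]
    refine le_trans (Finset.sum_le_sum fun o _ => ?_) hP1
    have : 0 ≤ (1 - e o v) * (1 - e o v') :=
      mul_nonneg (by linarith [he1 o v]) (by linarith [he1 o v'])
    nlinarith [hP o]
  have key : ∀ n : ℕ, ∀ (C : V × B → V × B → ℝ) (s : ℝ), (∀ p q, 0 ≤ C p q) →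
      (∀ f, IsSubA f → ∑ p, ∑ q, C p q * (f p * f q) ≤ s) →
      ∑ p, ∑ q, C p q * (k p q * (1 - (1 - ρ p.1 q.1) ^ n)) ≤ s := by
    intro n
    induction n with
    | zero =>
      intro C s hC hs
      have := hs (fun _ => 0) ⟨fun _ => le_refl _, fun _ => by simp⟩
      simpa using this
    | succ n ih =>
      intro C s hC hs
      have := aux_step P hP hP1 e he1 g hg0 hg _ ih C s hC hs
      refine le_trans (le_of_eq ?_) this
      refine Finset.sum_congr rfl fun p _ => Finset.sum_congr rfl fun q _ => ?_
      rw [← hρ, ← hρk]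
      ring
  have lim : Filter.Tendsto (fun n : ℕ => ∑ p, ∑ q, C p q * (k p q * (1 - (1 - ρ p.1 q.1) ^ n)))
      Filter.atTop (nhds (∑ p, ∑ q, C p q * k p q)) := by
    refine tendsto_finsetSum _ fun p _ => tendsto_finsetSum _ fun q _ => ?_
    refine Filter.Tendsto.const_mul _ ?_
    by_cases h : ρ p.1 q.1 = 0
    · simp [hk0 p q h]
    · have h1 : Filter.Tendsto (fun n : ℕ => (1 - ρ p.1 q.1) ^ n) Filter.atTop (nhds 0) :=
        tendsto_pow_atTop_nhds_zero_of_lt_one (by linarith [hρ1 p.1 q.1])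
          (by linarith [lt_of_le_of_ne (hρ0 p.1 q.1) (Ne.symm h)])
      have h2 := (h1.const_sub 1).const_mul (k p q)
      simpa using h2
  exact le_of_tendsto' lim fun n => key n C s hC hs

theorem aux_tangent (t q : ℝ) (ht : 0 < t) (ht1 : t ≤ 1) (hq : 0 ≤ q) :
    2 * q / (1 + q ^ 2) ≤ (1 - t ^ 2) / (t * (1 + t ^ 2) ^ 2) * q ^ 2
      + t * (1 + 3 * t ^ 2) / (1 + t ^ 2) ^ 2 := by
  have h : (1 - t ^ 2) / (t * (1 + t ^ 2) ^ 2) * q ^ 2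
      + t * (1 + 3 * t ^ 2) / (1 + t ^ 2) ^ 2 - 2 * q / (1 + q ^ 2) =
      (t - q) ^ 2 * ((1 - t^2) * q ^ 2 + 2 * t * (1 - t ^ 2) * q + (1 + 3 * t ^ 2))
       / (t * (1 + t ^ 2) ^ 2 * (1 + q ^ 2)) := by
    field_simp
    ring
  have : 0 ≤ (t - q) ^ 2 * ((1 - t^2) * q ^ 2 + 2 * t * (1 - t ^ 2) * q + (1 + 3 * t ^ 2))
       / (t * (1 + t ^ 2) ^ 2 * (1 + q ^ 2)) := by
    have : 0 ≤ 1 - t ^ 2 := by nlinarith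
    positivity
  linarith

theorem aux_scalar {I : Type*} [Fintype I] (t : ℝ) (ht : 0 < t) (ht1 : t ≤ 1) (D K : ℝ)
    (hD : 0 ≤ D) (hK : 0 ≤ K)
    (F F' y : I → ℝ) (hF : ∀ i, 0 ≤ F i) (hF' : ∀ i, 0 ≤ F' i)
    (hFK : ∑ i, F i ^ 2 ≤ K) (hFK' : ∑ i, F' i ^ 2 ≤ K)
    (hy : ∀ i, 0 ≤ y i) (hyD : ∀ i, y i ≤ D * (F i * F' i)) :
    ∑ i, y i ≤ K * ((1 - t ^ 2) / (t * (1 + t ^ 2) ^ 2) *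
      ((∑ i, y i * (min (F i ^ 2) (F' i ^ 2) / (F i * F' i))) / (∑ i, max (F i ^ 2) (F' i ^ 2)))
      + t * (1 + 3 * t ^ 2) / (1 + t ^ 2) ^ 2 * D) := by
  set m := ∑ i, y i * (min (F i ^ 2) (F' i ^ 2) / (F i * F' i)) with hm
  set M := ∑ i, max (F i ^ 2) (F' i ^ 2) with hM
  have hm0 : 0 ≤ m := Finset.sum_nonneg fun i _ => mul_nonneg (hy i)
    (div_nonneg (le_min (sq_nonneg _) (sq_nonneg _)) (mul_nonneg (hF i) (hF' i)))
  have hM0 : 0 ≤ M := Finset.sum_nonneg fun i _ => le_trans (sq_nonneg _) (le_max_left _ _)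
  have ha : 0 ≤ (1 - t ^ 2) / (t * (1 + t ^ 2) ^ 2) := by
    have : 0 ≤ 1 - t ^ 2 := by nlinarith
    positivity
  have hb : 0 ≤ t * (1 + 3 * t ^ 2) / (1 + t ^ 2) ^ 2 := by positivity
  have hmin : m ≤ D * ∑ i, min (F i ^ 2) (F' i ^ 2) := by
    rw [Finset.mul_sum]
    refine Finset.sum_le_sum fun i _ => ?_
    have hn : 0 ≤ min (F i ^ 2) (F' i ^ 2) := le_min (sq_nonneg _) (sq_nonneg _)
    by_cases h : F i * F' i = 0
    · rw [h]; simp; positivity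
    · have hp := lt_of_le_of_ne (mul_nonneg (hF i) (hF' i)) (Ne.symm h)
      rw [← mul_div_assoc, div_le_iff₀ hp]
      nlinarith [hyD i]
  have hsum : (∑ i, min (F i ^ 2) (F' i ^ 2)) + M ≤ 2 * K := by
    rw [hM, ← Finset.sum_add_distrib]
    simp only [min_add_max, Finset.sum_add_distrib]
    linarith
  have hmM : ∑ i, min (F i ^ 2) (F' i ^ 2) ≤ M :=
    Finset.sum_le_sum fun i _ => min_le_max
  have hcs : (∑ i, y i) ^ 2 ≤ m * (D * M) := by
    refine le_trans (Finset.sum_sq_le_sum_mul_sum_of_sq_le_mul Finset.univ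
      (f := fun i => y i * (min (F i ^ 2) (F' i ^ 2) / (F i * F' i)))
      (g := fun i => y i * (max (F i ^ 2) (F' i ^ 2) / (F i * F' i))) ?_ ?_ ?_) ?_
    · exact fun i _ => mul_nonneg (hy i)
        (div_nonneg (le_min (sq_nonneg _) (sq_nonneg _)) (mul_nonneg (hF i) (hF' i)))
    · exact fun i _ => mul_nonneg (hy i)
        (div_nonneg (le_trans (sq_nonneg _) (le_max_left _ _)) (mul_nonneg (hF i) (hF' i)))
    · intro i _
      refine le_of_eq ?_
      by_cases h : F i * F' i = 0
      · have h1 := hyD i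
        rw [h] at h1
        have : y i = 0 := le_antisymm (by linarith) (hy i)
        simp [this]
      · have h2 := min_mul_max (F i ^ 2) (F' i ^ 2)
        have : y i * (min (F i ^ 2) (F' i ^ 2) / (F i * F' i)) *
          (y i * (max (F i ^ 2) (F' i ^ 2) / (F i * F' i))) =
          y i ^ 2 * ((min (F i ^ 2) (F' i ^ 2) * max (F i ^ 2) (F' i ^ 2)) / (F i * F' i) ^ 2) := by
          ring
        rw [this, h2, ← mul_pow, div_self (pow_ne_zero 2 h), mul_one]
    · refine mul_le_mul_of_nonneg_left ?_ hm0
      rw [hM, Finset.mul_sum]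
      refine Finset.sum_le_sum fun i _ => ?_
      have hn : 0 ≤ max (F i ^ 2) (F' i ^ 2) := le_trans (sq_nonneg _) (le_max_left _ _)
      by_cases h : F i * F' i = 0
      · rw [h]; simp only [div_zero, mul_zero]; positivity
      · have hp := lt_of_le_of_ne (mul_nonneg (hF i) (hF' i)) (Ne.symm h)
        rw [← mul_div_assoc, div_le_iff₀ hp]
        nlinarith [hyD i]
  have hX0 : 0 ≤ ∑ i, y i := Finset.sum_nonneg fun i _ => hy i
  by_cases hDM : D * M = 0
  · rw [hDM, mul_zero] at hcs
    have : ∑ i, y i = 0 := by nlinarith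
    rw [this]
    exact mul_nonneg hK (add_nonneg (mul_nonneg ha (div_nonneg hm0 hM0)) (mul_nonneg hb hD))
  · have hDp : 0 < D := lt_of_le_of_ne hD (fun h => hDM (by rw [← h, zero_mul]))
    have hMp : 0 < M := lt_of_le_of_ne hM0 (fun h => hDM (by rw [← h, mul_zero]))
    set q := Real.sqrt (m / (D * M)) with hq
    have hq0 : 0 ≤ q := Real.sqrt_nonneg _
    have hqs : q ^ 2 = m / (D * M) := Real.sq_sqrt (by positivity)
    have hqm : m = D * M * q ^ 2 := by rw [hqs]; field_simp
    have hq1 : q ≤ 1 := by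
      rw [hq]
      refine Real.sqrt_le_one.mpr ?_
      rw [div_le_one (by positivity)]
      nlinarith
    have hX : ∑ i, y i ≤ D * M * q := by
      refine abs_le_of_sq_le_sq' ?_ (by positivity) |>.2
      rw [hqm] at hcs
      linarith [hcs, show (D * M * q) ^ 2 = D * M * q ^ 2 * (D * M) by ring]
    have hM2 : M * (1 + q ^ 2) ≤ 2 * K := by
      have : D * (M * q ^ 2) ≤ D * ∑ i, min (F i ^ 2) (F' i ^ 2) := by
        refine le_trans (le_of_eq ?_) hmin
        rw [hqm]; ring
      have := le_of_mul_le_mul_left this hDp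
      linarith
    have hM3 : M * q ≤ K * (2 * q / (1 + q ^ 2)) := by
      rw [← mul_div_assoc, le_div_iff₀ (by positivity)]
      nlinarith
    have ht := aux_tangent t q ht ht1 hq0
    have e1 : m / M = D * q ^ 2 := by rw [hqm]; field_simp
    rw [e1]
    calc ∑ i, y i ≤ D * (M * q) := by linarith
      _ ≤ D * (K * (2 * q / (1 + q ^ 2))) := mul_le_mul_of_nonneg_left hM3 hD
      _ ≤ D * (K * _) := mul_le_mul_of_nonneg_left (mul_le_mul_of_nonneg_left ht hK) hD
      _ = _ := by ring

theorem aux_core {V B I : Type*} [Fintype V] [Fintype B] [Fintype I] [DecidableEq V]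
    (C : V × B → V × B → ℝ) (D : V → V → ℝ) (hC : ∀ p q, 0 ≤ C p q) (hD : ∀ v v', 0 ≤ D v v')
    (hCD : ∀ p q, C p q ≤ D p.1 q.1) (hD1 : ∑ v, ∑ v', D v v' ≤ 1)
    (t : ℝ) (ht : 0 < t) (ht1 : t ≤ 1)
    (hs : ∀ f, IsSubA f → ∑ p, ∑ q, C p q * (f p * f q) ≤ t ^ 2)
    (h : I → V × B → ℝ) (hh : ∀ i p, 0 ≤ h i p) (K : ℝ) (hK : 0 ≤ K)
    (hhK : ∀ v, ∑ i, (∑ β, h i (v, β)) ^ 2 ≤ K) :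
    ∑ i, ∑ p, ∑ q, C p q * (h i p * h i q) ≤ K * (2 * t / (1 + t ^ 2)) := by
  classical
  set F : I → V → ℝ := fun i v => ∑ β, h i (v, β) with hF
  have hF0 : ∀ i v, 0 ≤ F i v := fun i v => Finset.sum_nonneg fun β _ => hh i _
  have hW := fun i => aux_thresh _ (fun v => F i v ^ 2) (fun v => sq_nonneg _) rfl
  choose W hW0 hWs using hW
  have hWs1 : ∀ i v, ∑ S, W i S * (if v ∈ S then 1 else 0) = F i v ^ 2 := by
    intro i v
    have := hWs i v v
    rw [min_self] at this
    rw [← this]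
    refine Finset.sum_congr rfl fun S _ => ?_
    split_ifs <;> simp
  set T : ℝ := (∑ o : I × Finset V, W o.1 o.2) + 1 with hT
  have hW00 : 0 ≤ ∑ o : I × Finset V, W o.1 o.2 := Finset.sum_nonneg fun o _ => hW0 _ _
  have hTp : 0 < T := by linarith
  set M : V → V → ℝ := fun v v' => ∑ i, max (F i v ^ 2) (F i v' ^ 2) with hM
  set k : V × B → V × B → ℝ := fun p q =>
    (∑ i, min (F i p.1 ^ 2) (F i q.1 ^ 2) / (F i p.1 * F i q.1) * (h i p * h i q)) / M p.1 q.1 with hk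
  have hround : ∑ p, ∑ q, C p q * k p q ≤ t ^ 2 := by
    refine aux_round (Ω := I × Finset V) (fun o => W o.1 o.2 / T)
      (fun o => div_nonneg (hW0 _ _) hTp.le) ?_
      (fun o v => if v ∈ o.2 then 1 else 0) ?_
      (fun o p => (if p.1 ∈ o.2 then 1 else 0) * (h o.1 p / F o.1 p.1)) ?_ ?_
      k (fun v v' => M v v' / T) ?_ ?_ ?_ C _ hC hs
    · rw [← Finset.sum_div, div_le_one hTp]
      linarith
    · intro o v
      split_ifs <;> norm_num
    · intro o p
      refine mul_nonneg ?_ (div_nonneg (hh _ _) (hF0 _ _))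
      split_ifs <;> norm_num
    · intro o v
      have : (∑ β, h o.1 (v, β)) / F o.1 v ≤ 1 := div_self_le_one _
      rw [Finset.sum_div] at this
      by_cases hv : v ∈ o.2
      · simpa [hv] using this
      · simp [hv]
    · intro v v'
      rw [Fintype.sum_prod_type, hM, Finset.sum_div]
      refine Finset.sum_congr rfl fun i _ => ?_
      have e1 : ∀ S : Finset V, W i S / T * ((if v ∈ S then 1 else 0) + (if v' ∈ S then 1 else 0)
          - (if v ∈ S then 1 else 0) * (if v' ∈ S then 1 else 0)) =
          (W i S * (if v ∈ S then 1 else 0) + W i S * (if v' ∈ S then 1 else 0)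
          - W i S * ((if v ∈ S then 1 else 0) * (if v' ∈ S then 1 else 0))) / T := by
        intro S; ring
      simp only [e1, ← Finset.sum_div, Finset.sum_sub_distrib, Finset.sum_add_distrib, hWs1, hWs]
      congr 1
      linarith [min_add_max (F i v ^ 2) (F i v' ^ 2)]
    · intro p q
      have e0 : M p.1 q.1 / T * k p q =
        (∑ i, min (F i p.1 ^ 2) (F i q.1 ^ 2) / (F i p.1 * F i q.1) * (h i p * h i q)) / T := by
        by_cases h0 : M p.1 q.1 = 0
        · have h1 : ∀ i, max (F i p.1 ^ 2) (F i q.1 ^ 2) = 0 := by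
            intro i
            exact (Finset.sum_eq_zero_iff_of_nonneg
              (fun i _ => le_trans (sq_nonneg _) (le_max_left _ _))).1 h0 i (Finset.mem_univ _)
          have h2 : ∀ i, min (F i p.1 ^ 2) (F i q.1 ^ 2) = 0 := fun i =>
            le_antisymm (le_trans min_le_max (h1 i).le) (le_min (sq_nonneg _) (sq_nonneg _))
          simp [h0, h2]
        · rw [hk]; field_simp
      rw [e0, Fintype.sum_prod_type, Finset.sum_div]
      refine Finset.sum_congr rfl fun i _ => ?_
      rw [← hWs, Finset.sum_div, Finset.sum_mul, Finset.sum_div]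
      refine Finset.sum_congr rfl fun S _ => ?_
      simp only [div_eq_mul_inv, mul_inv]
      ring
    · intro p q h0
      have : M p.1 q.1 = 0 := by
        rcases div_eq_zero_iff.1 h0 with h | h
        · exact h
        · exact absurd h hTp.ne'
      simp [hk, this]
  set y : V → V → I → ℝ := fun v v' i => ∑ β, ∑ β', C (v, β) (v', β') * (h i (v, β) * h i (v', β'))
    with hy
  have hsc := fun v v' => aux_scalar t ht ht1 (D v v') K (hD v v') hK (fun i => F i v)
    (fun i => F i v') (y v v') (fun i => hF0 i v) (fun i => hF0 i v') (hhK v) (hhK v')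
    (fun i => Finset.sum_nonneg fun β _ => Finset.sum_nonneg fun β' _ =>
      mul_nonneg (hC _ _) (mul_nonneg (hh _ _) (hh _ _)))
    (by
      intro i
      rw [hF]
      simp only
      rw [Finset.sum_mul_sum, Finset.mul_sum]
      refine Finset.sum_le_sum fun β _ => ?_
      rw [Finset.mul_sum]
      refine Finset.sum_le_sum fun β' _ => ?_
      exact mul_le_mul_of_nonneg_right (hCD _ _) (mul_nonneg (hh _ _) (hh _ _)))
  have hX : ∑ i, ∑ p, ∑ q, C p q * (h i p * h i q) = ∑ v, ∑ v', ∑ i, y v v' i := by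
    simp only [Fintype.sum_prod_type, hy]
    rw [Finset.sum_comm]
    refine Finset.sum_congr rfl fun v _ => ?_
    rw [Finset.sum_comm (γ := V)]
    refine Finset.sum_congr rfl fun i _ => ?_
    exact Finset.sum_comm
  have hR : ∑ v, ∑ v', (∑ i, y v v' i * (min (F i v ^ 2) (F i v' ^ 2) / (F i v * F i v'))) / M v v'
      = ∑ p, ∑ q, C p q * k p q := by
    simp only [Fintype.sum_prod_type, hk]
    refine Finset.sum_congr rfl fun v _ => ?_
    rw [Finset.sum_comm (γ := B)]
    refine Finset.sum_congr rfl fun v' _ => ?_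
    simp only [hy, Finset.sum_mul, Finset.sum_div, Finset.mul_sum]
    rw [Finset.sum_comm]
    refine Finset.sum_congr rfl fun β _ => ?_
    rw [Finset.sum_comm]
    refine Finset.sum_congr rfl fun β' _ => ?_
    refine Finset.sum_congr rfl fun i _ => ?_
    ring
  have ha : 0 ≤ (1 - t ^ 2) / (t * (1 + t ^ 2) ^ 2) := by
    have : 0 ≤ 1 - t ^ 2 := by nlinarith
    positivity
  have hb : 0 ≤ t * (1 + 3 * t ^ 2) / (1 + t ^ 2) ^ 2 := by positivity
  rw [hX]
  refine le_trans (Finset.sum_le_sum fun v _ => Finset.sum_le_sum fun v' _ => hsc v v') ?_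
  simp only [← Finset.mul_sum, Finset.sum_add_distrib]
  refine mul_le_mul_of_nonneg_left ?_ hK
  rw [hM] at hR
  simp only at hR
  rw [hR]
  have e1 := mul_le_mul_of_nonneg_left hround ha
  have e2 := mul_le_mul_of_nonneg_left hD1 hb
  refine le_trans (add_le_add e1 e2) (le_of_eq ?_)
  field_simp
  ring

namespace ProjGame

theorem wU_nonneg' (G : ProjGame) (u : G.Q1) : 0 ≤ G.wU u :=
  Finset.sum_nonneg fun _ _ => Finset.sum_nonneg fun _ _ => G.μ_nonneg _

theorem wU_sum' (G : ProjGame) : ∑ u, G.wU u = 1 := by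
  rw [← G.μ_sum]
  simp only [wU, Fintype.sum_prod_type]

theorem tsum' (G H : ProjGame)
    (Ψ : (G.tensor H).Q1 × (G.tensor H).Q2 × ((G.tensor H).A → Option (G.tensor H).A) → ℝ) :
    ∑ x, (G.tensor H).μ x * Ψ x = ∑ y1, ∑ y2, G.μ y1 * H.μ y2 *
      Ψ ((y1.1, y2.1), (y1.2.1, y2.2.1), tensorC y1.2.2 y2.2.2) := by
  have : ∀ x, (G.tensor H).μ x =
    ∑ y : (G.Q1 × G.Q2 × (G.A → Option G.A)) × (H.Q1 × H.Q2 × (H.A → Option H.A)),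
      if (((y.1.1, y.2.1), (y.1.2.1, y.2.2.1), tensorC y.1.2.2 y.2.2.2) :
        (G.tensor H).Q1 × (G.tensor H).Q2 × ((G.tensor H).A → Option (G.tensor H).A)) = x
      then G.μ y.1 * H.μ y.2 else 0 := fun x => rfl
  simp only [this, Finset.sum_mul]
  rw [Finset.sum_comm, Fintype.sum_prod_type]
  refine Finset.sum_congr rfl fun y1 _ => Finset.sum_congr rfl fun y2 _ => ?_
  simp only [ite_mul, zero_mul, Finset.sum_ite_eq, Finset.mem_univ, if_true]

theorem marg' (G H : ProjGame) (u : G.Q1) (u' : H.Q1)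
    (Φ : (G.tensor H).Q2 → ((G.tensor H).A → Option (G.tensor H).A) → ℝ) :
    ∑ v, ∑ π, (G.tensor H).μ ((u, u'), v, π) * Φ v π =
    ∑ v, ∑ π, ∑ v', ∑ π', G.μ (u, v, π) * H.μ (u', v', π') * Φ (v, v') (tensorC π π') := by
  obtain ⟨U0, hU0⟩ : ∃ U : (G.tensor H).Q1, U = (u, u') := ⟨_, rfl⟩
  rw [← hU0]
  have h := tsum' G H (fun x => if x.1 = U0 then Φ x.2.1 x.2.2 else 0)
  have h1 : ∀ (a : G.Q1) (b : H.Q1), (((a, b) : (G.tensor H).Q1) = (u, u')) ↔ (a = u ∧ b = u') := by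
    intro a b
    exact Prod.mk.injEq _ _ _ _ ▸ Iff.rfl
  have hl : ∑ x, (G.tensor H).μ x * (if x.1 = U0 then Φ x.2.1 x.2.2 else 0) =
    ∑ v, ∑ π, (G.tensor H).μ (U0, v, π) * Φ v π := by
    rw [Fintype.sum_prod_type, Finset.sum_eq_single U0]
    · simp only [Fintype.sum_prod_type, if_true]
    · intro b _ hb
      simp [hb]
    · intro hb
      exact absurd (Finset.mem_univ _) hb
  rw [hl] at h
  rw [h, Fintype.sum_prod_type, Finset.sum_eq_single u]
  · rw [Fintype.sum_prod_type]
    refine Finset.sum_congr rfl fun v _ => Finset.sum_congr rfl fun π _ => ?_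
    rw [Fintype.sum_prod_type, Finset.sum_eq_single u']
    · rw [Fintype.sum_prod_type]
      refine Finset.sum_congr rfl fun v' _ => Finset.sum_congr rfl fun π' _ => ?_
      rw [if_pos hU0.symm]
    · intro b _ hb
      refine Finset.sum_eq_zero fun z _ => ?_
      rw [if_neg, mul_zero]
      exact fun hc => hb ((h1 _ _).1 (Eq.trans hc hU0)).2
    · simp
  · intro b _ hb
    refine Finset.sum_eq_zero fun z _ => Finset.sum_eq_zero fun z' _ => ?_
    rw [if_neg, mul_zero]
    exact fun hc => hb ((h1 _ _).1 (Eq.trans hc hU0)).1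
  · simp

theorem tensor_wU' (G H : ProjGame) (u : G.Q1) (u' : H.Q1) :
    (G.tensor H).wU (u, u') = G.wU u * H.wU u' := by
  have := marg' G H u u' (fun _ _ => 1)
  simp only [mul_one] at this
  refine Eq.trans this ?_
  rw [wU, wU, Finset.sum_mul]
  refine Finset.sum_congr rfl fun v _ => ?_
  rw [Finset.sum_mul]
  refine Finset.sum_congr rfl fun π _ => ?_
  rw [Finset.mul_sum]
  refine Finset.sum_congr rfl fun v' _ => ?_
  rw [Finset.mul_sum]

theorem tensorC_some {A A' : Type} (π : A → Option A) (π' : A' → Option A') (b : A) (b' : A')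
    (a : A) (a' : A') : tensorC π π' (b, b') = some (a, a') ↔ π b = some a ∧ π' b' = some a' := by
  unfold tensorC
  cases h : π b <;> cases h' : π' b' <;> simp [h, h']

theorem tensor_op' (G H : ProjGame) (f : (G.tensor H).Q2 × (G.tensor H).A → ℝ)
    (u : G.Q1) (u' : H.Q1) (α : G.A) (α' : H.A) :
    (G.tensor H).op f ((u, u'), (α, α')) =
      G.op (fun p => H.op (fun q => f ((p.1, q.1), (p.2, q.2))) (u', α')) (u, α) := by
  have hb : ∀ (v : G.Q2) (v' : H.Q2) (π : G.A → Option G.A) (π' : H.A → Option H.A),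
      (∑ β : (G.tensor H).A, if tensorC π π' β = some ((α, α') : G.A × H.A)
        then f ((v, v'), β) else 0) =
      ∑ β, ∑ β', if π β = some α then (if π' β' = some α' then f ((v, v'), (β, β')) else 0) else 0 := by
    intro v v' π π'
    refine Eq.trans (Fintype.sum_prod_type (f := fun β : G.A × H.A =>
      if tensorC π π' β = some ((α, α') : G.A × H.A) then f ((v, v'), β) else 0)) ?_
    refine Finset.sum_congr rfl fun β _ => Finset.sum_congr rfl fun β' _ => ?_
    simp only [tensorC_some]
    rw [← ite_and]
  obtain ⟨a0, ha0⟩ : ∃ a : (G.tensor H).A, a = (α, α') := ⟨_, rfl⟩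
  have hm := marg' G H u u' (fun v π => ∑ β : (G.tensor H).A,
    if π β = some a0 then f (v, β) else 0)
  subst ha0
  unfold op
  simp only
  refine Eq.trans (congrArg₂ (· / ·) hm (tensor_wU' G H u u')) ?_
  rw [mul_comm (G.wU u), ← div_div]
  congr 1
  rw [Finset.sum_div]
  refine Finset.sum_congr rfl fun v _ => ?_
  rw [Finset.sum_div]
  refine Finset.sum_congr rfl fun π _ => ?_
  have e1 : ∀ v' π', (∑ β : (G.tensor H).A, if tensorC π π' β = some ((α, α') : G.A × H.A)
        then f ((v, v'), β) else 0) =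
      ∑ β, if π β = some α then
        (∑ β', if π' β' = some α' then f ((v, v'), (β, β')) else 0) else 0 := by
    intro v' π'
    refine (hb v v' π π').trans (Finset.sum_congr rfl fun β _ => ?_)
    split_ifs <;> simp
  have e2 : ∀ v' π', G.μ (u, v, π) * H.μ (u', v', π') *
      (∑ β : (G.tensor H).A, if tensorC π π' β = some ((α, α') : G.A × H.A)
        then f ((v, v'), β) else 0) = G.μ (u, v, π) * ∑ β, if π β = some α then
        (H.μ (u', v', π') * ∑ β', if π' β' = some α' then f ((v, v'), (β, β')) else 0) else 0 := by
    intro v' π'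
    rw [e1, mul_assoc, Finset.mul_sum]
    congr 1
    refine Finset.sum_congr rfl fun β _ => ?_
    split_ifs <;> simp
  refine Eq.trans (congrArg (· / H.wU u') (Finset.sum_congr rfl fun v' _ =>
    Finset.sum_congr rfl fun π' _ => e2 v' π')) ?_
  simp only [← Finset.mul_sum]
  rw [mul_div_assoc]
  congr 1
  rw [Finset.sum_div]
  have e3 : ∀ v', (∑ π' : H.A → Option H.A, ∑ β, if π β = some α then
        (H.μ (u', v', π') * ∑ β', if π' β' = some α' then f ((v, v'), (β, β')) else 0) else 0) =
      ∑ β, if π β = some α then ∑ π' : H.A → Option H.A,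
        (H.μ (u', v', π') * ∑ β', if π' β' = some α' then f ((v, v'), (β, β')) else 0) else 0 := by
    intro v'
    rw [Finset.sum_comm]
    refine Finset.sum_congr rfl fun β _ => ?_
    split_ifs <;> simp
  simp only [e3]
  simp only [Finset.sum_div]
  rw [Finset.sum_comm]
  refine Finset.sum_congr rfl fun β _ => ?_
  split_ifs <;> simp [Finset.sum_div]

theorem tensor_norm' (G H : ProjGame) (f : (G.tensor H).Q2 × (G.tensor H).A → ℝ) :
    (G.tensor H).normUsq ((G.tensor H).op f) = ∑ i : H.Q1 × H.A, H.wU i.1 *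
      G.normUsq (G.op (fun p => H.op (fun q => f ((p.1, q.1), (p.2, q.2))) i)) := by
  have e1 : (G.tensor H).normUsq ((G.tensor H).op f) = ∑ u : G.Q1, ∑ u' : H.Q1,
      (G.tensor H).wU (u, u') * ∑ α : G.A, ∑ α' : H.A, ((G.tensor H).op f ((u, u'), (α, α'))) ^ 2 := by
    unfold normUsq
    refine Eq.trans (Fintype.sum_prod_type (f := fun u : G.Q1 × H.Q1 => (G.tensor H).wU u *
      ∑ α : (G.tensor H).A, ((G.tensor H).op f (u, α)) ^ 2)) ?_
    refine Finset.sum_congr rfl fun u _ => Finset.sum_congr rfl fun u' _ => ?_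
    congr 1
    exact (Fintype.sum_prod_type (f := fun α : G.A × H.A =>
      ((G.tensor H).op f ((u, u'), α)) ^ 2))
  rw [e1]
  simp only [tensor_op', tensor_wU', normUsq, Fintype.sum_prod_type, Finset.mul_sum]
  rw [Finset.sum_comm]
  refine Finset.sum_congr rfl fun u' _ => ?_
  rw [Finset.sum_comm (s := (Finset.univ : Finset H.A))]
  refine Finset.sum_congr rfl fun u _ => ?_
  rw [Finset.sum_comm]
  refine Finset.sum_congr rfl fun α' _ => Finset.sum_congr rfl fun α _ => ?_
  ring

/-- kernel -/
noncomputable def ker' (G : ProjGame) (u : G.Q1) (α : G.A) (p : G.Q2 × G.A) : ℝ :=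
  (∑ π, G.μ (u, p.1, π) * if π p.2 = some α then 1 else 0) / G.wU u

/-- marginal kernel -/
noncomputable def kap' (G : ProjGame) (u : G.Q1) (v : G.Q2) : ℝ :=
  (∑ π, G.μ (u, v, π)) / G.wU u

/-- quadratic form -/
noncomputable def C' (G : ProjGame) (p q : G.Q2 × G.A) : ℝ :=
  ∑ u, G.wU u * ∑ α, G.ker' u α p * G.ker' u α q

/-- dominating form -/
noncomputable def D' (G : ProjGame) (v v' : G.Q2) : ℝ :=
  ∑ u, G.wU u * (G.kap' u v * G.kap' u v')

theorem op_eq' (G : ProjGame) (f : G.Q2 × G.A → ℝ) (u : G.Q1) (α : G.A) :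
    G.op f (u, α) = ∑ p, G.ker' u α p * f p := by
  simp only [op, ker', Fintype.sum_prod_type, Finset.sum_div, Finset.sum_mul, Finset.mul_sum]
  refine Finset.sum_congr rfl fun v _ => ?_
  rw [Finset.sum_comm]
  refine Finset.sum_congr rfl fun β _ => Finset.sum_congr rfl fun π _ => ?_
  split_ifs <;> simp; ring

theorem ker_nonneg' (G : ProjGame) (u : G.Q1) (α : G.A) (p : G.Q2 × G.A) : 0 ≤ G.ker' u α p := by
  refine div_nonneg (Finset.sum_nonneg fun π _ => mul_nonneg (G.μ_nonneg _) ?_) (G.wU_nonneg' u)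
  split_ifs <;> norm_num

theorem kap_nonneg' (G : ProjGame) (u : G.Q1) (v : G.Q2) : 0 ≤ G.kap' u v :=
  div_nonneg (Finset.sum_nonneg fun π _ => (G.μ_nonneg _)) (G.wU_nonneg' u)

theorem ker_sum' (G : ProjGame) (u : G.Q1) (p : G.Q2 × G.A) :
    ∑ α, G.ker' u α p ≤ G.kap' u p.1 := by
  unfold ker' kap'
  rw [← Finset.sum_div]
  refine div_le_div_of_nonneg_right ?_ (G.wU_nonneg' u)
  rw [Finset.sum_comm]
  refine Finset.sum_le_sum fun π _ => ?_
  rw [← Finset.mul_sum]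
  refine mul_le_of_le_one_right (G.μ_nonneg _) ?_
  cases h : π p.2 <;> simp

theorem comm3' {X Y Z : Type*} [Fintype X] [Fintype Y] [Fintype Z] (F : X → Y → Z → ℝ) :
    ∑ a, ∑ b, ∑ c, F a b c = ∑ b, ∑ c, ∑ a, F a b c := by
  rw [Finset.sum_comm]
  exact Finset.sum_congr rfl fun b _ => Finset.sum_comm

theorem norm_eq' (G : ProjGame) (f : G.Q2 × G.A → ℝ) :
    G.normUsq (G.op f) = ∑ p, ∑ q, G.C' p q * (f p * f q) := by
  simp only [normUsq, op_eq', C', pow_two]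
  simp only [Finset.sum_mul_sum]
  simp only [Finset.sum_mul, Finset.mul_sum]
  have e1 : ∀ u, ∑ α, ∑ p, ∑ q, G.wU u * (G.ker' u α p * f p * (G.ker' u α q * f q)) =
      ∑ p, ∑ q, ∑ α, G.wU u * (G.ker' u α p * f p * (G.ker' u α q * f q)) :=
    fun u => comm3' _
  simp only [e1]
  rw [comm3' (fun u p q => ∑ α, G.wU u * (G.ker' u α p * f p * (G.ker' u α q * f q)))]
  refine Finset.sum_congr rfl fun p _ => Finset.sum_congr rfl fun q _ => ?_
  refine Finset.sum_congr rfl fun u _ => Finset.sum_congr rfl fun α _ => ?_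
  ring

theorem C_nonneg' (G : ProjGame) (p q : G.Q2 × G.A) : 0 ≤ G.C' p q :=
  Finset.sum_nonneg fun u _ => mul_nonneg (G.wU_nonneg' u) (Finset.sum_nonneg fun α _ =>
    mul_nonneg (G.ker_nonneg' _ _ _) (G.ker_nonneg' _ _ _))

theorem D_nonneg' (G : ProjGame) (v v' : G.Q2) : 0 ≤ G.D' v v' :=
  Finset.sum_nonneg fun u _ => mul_nonneg (G.wU_nonneg' u)
    (mul_nonneg (G.kap_nonneg' _ _) (G.kap_nonneg' _ _))

theorem C_le_D' (G : ProjGame) (p q : G.Q2 × G.A) : G.C' p q ≤ G.D' p.1 q.1 := by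
  refine Finset.sum_le_sum fun u _ => mul_le_mul_of_nonneg_left ?_ (G.wU_nonneg' u)
  have : ∀ α, G.ker' u α q ≤ G.kap' u q.1 := fun α =>
    le_trans (Finset.single_le_sum (f := fun α => G.ker' u α q)
      (fun α _ => G.ker_nonneg' u α q) (Finset.mem_univ α)) (G.ker_sum' u q)
  calc ∑ α, G.ker' u α p * G.ker' u α q ≤ ∑ α, G.ker' u α p * G.kap' u q.1 :=
        Finset.sum_le_sum fun α _ => mul_le_mul_of_nonneg_left (this α) (G.ker_nonneg' _ _ _)
    _ = (∑ α, G.ker' u α p) * G.kap' u q.1 := by rw [Finset.sum_mul]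
    _ ≤ _ := mul_le_mul_of_nonneg_right (G.ker_sum' u p) (G.kap_nonneg' _ _)

theorem kap_sum' (G : ProjGame) (u : G.Q1) : ∑ v, G.kap' u v ≤ 1 := by
  unfold kap'
  rw [← Finset.sum_div]
  exact div_self_le_one _

theorem D_sum' (G : ProjGame) : ∑ v, ∑ v', G.D' v v' ≤ 1 := by
  have : ∑ v, ∑ v', G.D' v v' = ∑ u, G.wU u * ((∑ v, G.kap' u v) * (∑ v', G.kap' u v')) := by
    simp only [Finset.sum_mul_sum]
    simp only [D', Finset.mul_sum]
    exact (comm3' (fun u v v' => G.wU u * (G.kap' u v * G.kap' u v'))).symm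
  rw [this, ← G.wU_sum']
  refine Finset.sum_le_sum fun u _ => mul_le_of_le_one_right (G.wU_nonneg' u) ?_
  exact mul_le_one₀ (G.kap_sum' u) (Finset.sum_nonneg fun v _ => G.kap_nonneg' u v) (G.kap_sum' u)

theorem norm_le_one' (G : ProjGame) (f : G.Q2 × G.A → ℝ) (hf : IsSubA f) :
    G.normUsq (G.op f) ≤ 1 := by
  rw [norm_eq']
  calc ∑ p, ∑ q, G.C' p q * (f p * f q) ≤ ∑ p, ∑ q, G.D' p.1 q.1 * (f p * f q) :=
        Finset.sum_le_sum fun p _ => Finset.sum_le_sum fun q _ =>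
          mul_le_mul_of_nonneg_right (G.C_le_D' p q) (mul_nonneg (hf.1 p) (hf.1 q))
    _ = ∑ v, ∑ v', G.D' v v' * ((∑ β, f (v, β)) * (∑ β', f (v', β'))) := by
        simp only [Fintype.sum_prod_type, Finset.sum_mul_sum]
        simp only [Finset.mul_sum]
        refine Finset.sum_congr rfl fun v _ => Finset.sum_comm
    _ ≤ ∑ v, ∑ v', G.D' v v' := 
        Finset.sum_le_sum fun v _ => Finset.sum_le_sum fun v' _ =>
          mul_le_of_le_one_right (G.D_nonneg' v v')
            (mul_le_one₀ (hf.2 v) (Finset.sum_nonneg fun β _ => hf.1 _) (hf.2 v'))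
    _ ≤ 1 := G.D_sum'

theorem normUsq_nonneg' (G : ProjGame) (g : G.Q1 × G.A → ℝ) : 0 ≤ G.normUsq g :=
  Finset.sum_nonneg fun u _ => mul_nonneg (G.wU_nonneg' u) (Finset.sum_nonneg fun α _ => sq_nonneg _)

theorem collVal_nonneg' (G : ProjGame) : 0 ≤ G.collVal := by
  refine Real.sSup_nonneg ?_
  rintro x ⟨f, _, rfl⟩
  exact Real.sqrt_nonneg _

theorem collVal_le' (G : ProjGame) (K : ℝ) (hK : 0 ≤ K)
    (h : ∀ f, G.IsBob f → G.normUsq (G.op f) ≤ K) : G.collVal ^ 2 ≤ K := by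
  have : G.collVal ≤ Real.sqrt K := by
    refine Real.sSup_le ?_ (Real.sqrt_nonneg _)
    rintro x ⟨f, hf, rfl⟩
    exact Real.sqrt_le_sqrt (h f hf)
  calc G.collVal ^ 2 ≤ Real.sqrt K ^ 2 := pow_le_pow_left₀ G.collVal_nonneg' this 2
    _ = K := Real.sq_sqrt hK

theorem collVal_le_one' (G : ProjGame) : G.collVal ^ 2 ≤ 1 :=
  G.collVal_le' 1 zero_le_one fun f hf => G.norm_le_one' f ⟨hf.1, fun v => (hf.2 v).le⟩

theorem le_collVal' (G : ProjGame) (f : G.Q2 × G.A → ℝ) (hf : G.IsBob f) :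
    G.normUsq (G.op f) ≤ G.collVal ^ 2 := by
  have : Real.sqrt (G.normUsq (G.op f)) ≤ G.collVal := by
    refine le_csSup ⟨1, ?_⟩ ⟨f, hf, rfl⟩
    rintro x ⟨f, hf, rfl⟩
    exact Real.sqrt_le_one.mpr (G.norm_le_one' f ⟨hf.1, fun v => (hf.2 v).le⟩)
  calc G.normUsq (G.op f) = Real.sqrt (G.normUsq (G.op f)) ^ 2 :=
        (Real.sq_sqrt (G.normUsq_nonneg' _)).symm
    _ ≤ _ := pow_le_pow_left₀ (Real.sqrt_nonneg _) this 2

theorem sub_le_collVal' (G : ProjGame) (f : G.Q2 × G.A → ℝ) (hf : IsSubA f) :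
    ∑ p, ∑ q, G.C' p q * (f p * f q) ≤ G.collVal ^ 2 := by
  obtain ⟨b⟩ := G.neA
  let f' : G.Q2 × G.A → ℝ := fun p => f p + if p.2 = b then 1 - ∑ β, f (p.1, β) else 0
  have hff : ∀ p, f p ≤ f' p := by
    intro p
    have := hf.2 p.1
    simp only [f']
    split_ifs <;> linarith
  have hB : G.IsBob f' := by
    refine ⟨fun p => le_trans (hf.1 p) (hff p), fun v => ?_⟩
    simp [f', Finset.sum_add_distrib]
  refine le_trans ?_ (G.le_collVal' f' hB)
  rw [norm_eq']
  exact Finset.sum_le_sum fun p _ => Finset.sum_le_sum fun q _ =>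
    mul_le_mul_of_nonneg_left (mul_le_mul (hff p) (hff q) (hf.1 q)
      (le_trans (hf.1 p) (hff p))) (G.C_nonneg' p q)

theorem op_nonneg' (G : ProjGame) (f : G.Q2 × G.A → ℝ) (hf : ∀ p, 0 ≤ f p) (i : G.Q1 × G.A) :
    0 ≤ G.op f i := by
  obtain ⟨u, α⟩ := i
  rw [op_eq']
  exact Finset.sum_nonneg fun p _ => mul_nonneg (G.ker_nonneg' _ _ _) (hf p)

theorem tensor_bound' (G H : ProjGame) (f : (G.tensor H).Q2 × (G.tensor H).A → ℝ)
    (hf : (G.tensor H).IsBob f) (t : ℝ) (ht : 0 < t) (ht1 : t ≤ 1) (hGt : G.collVal ^ 2 ≤ t ^ 2) :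
    (G.tensor H).normUsq ((G.tensor H).op f) ≤ H.collVal ^ 2 * (2 * t / (1 + t ^ 2)) := by
  set h : H.Q1 × H.A → G.Q2 × G.A → ℝ := fun i p =>
    Real.sqrt (H.wU i.1) * H.op (fun q => f ((p.1, q.1), (p.2, q.2))) i with hh
  have key := aux_core G.C' G.D' G.C_nonneg' G.D_nonneg' G.C_le_D' G.D_sum' t ht ht1
    (fun f hf => le_trans (G.sub_le_collVal' f hf) hGt) h
    (fun i p => mul_nonneg (Real.sqrt_nonneg _) (H.op_nonneg' _ (fun q => hf.1 _) i))
    (H.collVal ^ 2) (sq_nonneg _) (by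
      intro v
      have hB : H.IsBob (fun q => ∑ β, f ((v, q.1), (β, q.2))) := by
        refine ⟨fun q => Finset.sum_nonneg fun β _ => hf.1 _, fun v' => ?_⟩
        rw [Finset.sum_comm]
        refine Eq.trans ?_ (hf.2 (v, v'))
        exact (Fintype.sum_prod_type (f := fun β : G.A × H.A => f ((v, v'), β))).symm
      refine le_trans (le_of_eq ?_) (H.le_collVal' _ hB)
      simp only [normUsq, Fintype.sum_prod_type, hh, Finset.mul_sum]
      refine Finset.sum_congr rfl fun u' _ => Finset.sum_congr rfl fun α' _ => ?_
      rw [← Finset.mul_sum, mul_pow, Real.sq_sqrt (H.wU_nonneg' _)]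
      congr 2
      simp only [op_eq', Finset.mul_sum]
      exact Finset.sum_comm)
  refine le_trans (le_of_eq ?_) key
  rw [tensor_norm']
  refine Finset.sum_congr rfl fun i _ => ?_
  rw [norm_eq', Finset.mul_sum]
  refine Finset.sum_congr rfl fun p _ => ?_
  rw [Finset.mul_sum]
  refine Finset.sum_congr rfl fun q _ => ?_
  have := Real.mul_self_sqrt (H.wU_nonneg' i.1)
  simp only [hh]
  rw [← this]
  ring_nf
  simp [Real.sqrt_sq (Real.sqrt_nonneg _), this]
  try ring

end ProjGame

theorem collision_value_product (G H : ProjGame) :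
    (G.tensor H).collVal ^ 2
      ≤ (2 * Real.sqrt (G.collVal ^ 2) / (1 + G.collVal ^ 2)) * H.collVal ^ 2 := by
  rw [Real.sqrt_sq G.collVal_nonneg', mul_comm]
  have h0 := G.collVal_nonneg'
  refine (G.tensor H).collVal_le' _ (by positivity) fun f hf => ?_
  rcases eq_or_lt_of_le h0 with h | h
  · rw [← h]
    simp only [mul_zero, zero_div]
    by_contra! hc
    set X := (G.tensor H).normUsq ((G.tensor H).op f) with hX
    have hb : ∀ t : ℝ, 0 < t → t ≤ 1 → X ≤ 2 * t := by
      intro t ht ht1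
      have h1 := ProjGame.tensor_bound' G H f hf t ht ht1 (by rw [← h]; nlinarith)
      have h2 : 2 * t / (1 + t ^ 2) ≤ 2 * t := div_le_self (by positivity) (by nlinarith)
      have h3 : 0 ≤ 2 * t / (1 + t ^ 2) := by positivity
      nlinarith [H.collVal_le_one']
    have h1 := hb (min 1 (X / 4)) (lt_min one_pos (by positivity)) (min_le_left _ _)
    have h2 := min_le_right 1 (X / 4)
    linarith
  · exact ProjGame.tensor_bound' G H f hf _ h (by nlinarith [G.collVal_le_one']) le_rfl
end

section
/- There exist universal constants c > 0 and C > 0 such that for every projection game G, every ε ∈ (0,1) with val(G) ≤ 1 − ε, and every positive integer k with k ≤ c/ε², one has val(G^{⊗k}) ≤ 1 − C·√k·ε. -/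
open Finset

namespace FR

noncomputable def PP {V A : Type} [Fintype A] [DecidableEq A] (f : V × A → ℝ) (v : V)
    (π : A → Option A) (α : A) : ℝ := ∑ β, if π β = some α then f (v, β) else 0

lemma PP_nonneg {V A : Type} [Fintype A] [DecidableEq A] (f : V × A → ℝ) (hf : ∀ p, 0 ≤ f p)
    (v : V) (π : A → Option A) (α : A) : 0 ≤ PP f v π α := by
  unfold PP
  refine sum_nonneg fun β _ => ?_
  split_ifs
  · exact hf _
  · exact le_rfl

lemma PP_sum_le {V A : Type} [Fintype A] [DecidableEq A] (f : V × A → ℝ) (hf : ∀ p, 0 ≤ f p)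
    (v : V) (π : A → Option A) : ∑ α, PP f v π α ≤ ∑ β, f (v, β) := by
  unfold PP
  rw [sum_comm]
  refine sum_le_sum fun β _ => ?_
  cases h : π β with
  | none => simpa using hf _
  | some a => simp

lemma mul_sum_le {A : Type} [Fintype A] (F G : A → ℝ) (hF : ∀ a, 0 ≤ F a) (hG : ∀ a, 0 ≤ G a) :
    ∑ a, F a * G a ≤ (∑ a, F a) * (∑ a, G a) := by
  rw [sum_mul]
  refine sum_le_sum fun a _ => ?_
  exact mul_le_mul_of_nonneg_left (single_le_sum (fun b _ => hG b) (mem_univ a)) (hF a)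

lemma mul_sum_le_one {A : Type} [Fintype A] (F G : A → ℝ) (hF : ∀ a, 0 ≤ F a) (hG : ∀ a, 0 ≤ G a)
    (h1 : ∑ a, F a ≤ 1) (h2 : ∑ a, G a ≤ 1) :
    ∑ a, F a * G a ≤ 1 := by
  refine (mul_sum_le F G hF hG).trans ?_
  exact mul_le_one₀ h1 (sum_nonneg fun a _ => hG a) h2

noncomputable def cr (t b a : ℝ) : ℝ := if a ≤ t ∧ t < b ∧ b < 5/6 then 1 else 0

lemma cr_nonneg (t b a : ℝ) : 0 ≤ cr t b a := by
  unfold cr; split_ifs <;> norm_num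

noncomputable def DD {J A : Type} [Fintype J] [Fintype A] (φ φ' : J → ℝ) (H H' : J → A → ℝ) : ℝ :=
  (1/2) * ((∑ j, φ j ^ 2) + ∑ j, φ' j ^ 2) - ∑ j, ∑ α, H j α * H' j α

lemma DD_eq {J A : Type} [Fintype J] [Fintype A] (φ φ' : J → ℝ) (H H' : J → A → ℝ) :
    DD φ φ' H H' = ∑ j, ((1/2) * (φ j - φ' j)^2 + (φ j * φ' j - ∑ α, H j α * H' j α)) := by
  unfold DD
  rw [← sum_add_distrib, mul_sum, ← sum_sub_distrib]
  refine sum_congr rfl fun j _ => ?_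
  ring

section
variable {J A : Type} [Fintype J] [Fintype A] (φ φ' : J → ℝ) (H H' : J → A → ℝ)
  (hH : ∀ j a, 0 ≤ H j a) (hH' : ∀ j a, 0 ≤ H' j a)
  (hs : ∀ j, ∑ a, H j a ≤ φ j) (hs' : ∀ j, ∑ a, H' j a ≤ φ' j)

include hH hH' hs hs' in
lemma term2 (j : J) : 0 ≤ φ j * φ' j - ∑ α, H j α * H' j α := by
  have h0 : 0 ≤ ∑ a, H j a := sum_nonneg fun a _ => hH j a
  have h0' : 0 ≤ ∑ a, H' j a := sum_nonneg fun a _ => hH' j a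
  have := mul_sum_le (H j) (H' j) (hH j) (hH' j)
  have := mul_le_mul (hs j) (hs' j) h0' (h0.trans (hs j))
  linarith

include hH hH' hs hs' in
lemma DD_ge_sq : ∑ j, (φ j - φ' j)^2 ≤ 2 * DD φ φ' H H' := by
  rw [DD_eq, mul_sum]
  refine sum_le_sum fun j _ => ?_
  have := term2 φ φ' H H' hH hH' hs hs' j
  linarith

include hH hH' hs hs' in
lemma DD_ge_term (j : J) : (1/2) * (φ j - φ' j)^2 + (φ j * φ' j - ∑ α, H j α * H' j α)
    ≤ DD φ φ' H H' := by
  rw [DD_eq]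
  refine single_le_sum (f := fun j => (1/2) * (φ j - φ' j)^2 + (φ j * φ' j - ∑ α, H j α * H' j α)) (fun j _ => ?_) (mem_univ j)
  have := term2 φ φ' H H' hH hH' hs hs' j
  positivity

include hH hH' hs hs' in
lemma DD_nonneg : 0 ≤ DD φ φ' H H' := by
  have := DD_ge_sq φ φ' H H' hH hH' hs hs'
  have : 0 ≤ ∑ j, (φ j - φ' j)^2 := sum_nonneg fun j _ => sq_nonneg _
  linarith

include hH hH' hs hs' in
lemma pw (h1 : ∑ j, φ j ≤ 1) (h1' : ∑ j, φ' j ≤ 1) (t : ℝ) (ht : 2/3 ≤ t) (ht' : t < 3/4)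
    (F F' Fs Fs' : A → ℝ) (hFs : ∀ a, 0 ≤ Fs a) (hFs' : ∀ a, 0 ≤ Fs' a)
    (hF0 : ∀ a, 0 ≤ F a) (hF0' : ∀ a, 0 ≤ F' a)
    (hFs1 : ∑ a, Fs a ≤ 1) (hFs1' : ∑ a, Fs' a ≤ 1)
    (hF : (∃ j, t < φ j ∧ ∀ a, F a = H j a / φ j) ∨ ((∀ j, φ j ≤ t) ∧ ∀ a, F a = Fs a))
    (hF' : (∃ j, t < φ' j ∧ ∀ a, F' a = H' j a / φ' j) ∨ ((∀ j, φ' j ≤ t) ∧ ∀ a, F' a = Fs' a)) :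
    1 - ∑ a, F a * F' a ≤ 288 * DD φ φ' H H' + ∑ j, (cr t (φ j) (φ' j) + cr t (φ' j) (φ j))
      + (if ∀ j, φ j < 3/4 then 1 else 0) * (1 - ∑ a, Fs a * Fs' a) := by
  classical
  have hls : 0 ≤ 1 - ∑ a, Fs a * Fs' a := by
    have := mul_sum_le_one Fs Fs' hFs hFs' hFs1 hFs1'
    linarith
  have hu : 0 ≤ (if ∀ j, φ j < 3/4 then (1:ℝ) else 0) * (1 - ∑ a, Fs a * Fs' a) := by
    apply mul_nonneg _ hls
    split_ifs <;> norm_num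
  have hcr : 0 ≤ ∑ j, (cr t (φ j) (φ' j) + cr t (φ' j) (φ j)) :=
    sum_nonneg fun j _ => add_nonneg (cr_nonneg _ _ _) (cr_nonneg _ _ _)
  have hcrj : ∀ j, cr t (φ j) (φ' j) + cr t (φ' j) (φ j) ≤
      ∑ j, (cr t (φ j) (φ' j) + cr t (φ' j) (φ j)) := fun j =>
    single_le_sum (f := fun j => cr t (φ j) (φ' j) + cr t (φ' j) (φ j))
      (fun j _ => add_nonneg (cr_nonneg _ _ _) (cr_nonneg _ _ _)) (mem_univ j)
  have hD0 := DD_nonneg φ φ' H H' hH hH' hs hs'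
  have hDj := DD_ge_term φ φ' H H' hH hH' hs hs'
  have ht2 := term2 φ φ' H H' hH hH' hs hs'
  have hφ : ∀ j, 0 ≤ φ j := fun j => (sum_nonneg fun a _ => hH j a).trans (hs j)
  have hφ' : ∀ j, 0 ≤ φ' j := fun j => (sum_nonneg fun a _ => hH' j a).trans (hs' j)
  have hFF : 0 ≤ ∑ a, F a * F' a := sum_nonneg fun a _ => mul_nonneg (hF0 a) (hF0' a)
  rcases hF with ⟨j, hj, hFj⟩ | ⟨hn, hFe⟩
  · rcases hF' with ⟨j', hj', hFj'⟩ | ⟨hn', hFe'⟩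
    · by_cases hjj : j = j'
      · subst hjj
        have e : ∑ a, F a * F' a = (∑ a, H j a * H' j a) / (φ j * φ' j) := by
          rw [sum_div]
          refine sum_congr rfl fun a _ => ?_
          rw [hFj, hFj', div_mul_div_comm]
        have hp : 1/4 ≤ φ j * φ' j := by nlinarith
        have : 1 - ∑ a, F a * F' a ≤ 4 * (φ j * φ' j - ∑ α, H j α * H' j α) := by
          rw [e, one_sub_div (by linarith), div_le_iff₀ (by linarith)]
          nlinarith [ht2 j]
        have := hDj j
        nlinarith [sq_nonneg (φ j - φ' j)]
      · have : φ' j + φ' j' ≤ 1 := by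
          refine le_trans ?_ h1'
          rw [← sum_pair hjj]
          exact sum_le_sum_of_subset_of_nonneg (subset_univ _) fun i _ _ => hφ' i
        have h3 : 1/3 ≤ φ j - φ' j := by linarith
        have := hDj j
        have := ht2 j
        nlinarith
    · -- v in S, v' not
      have hx := hn' j
      by_cases hb : φ j < 5/6
      · have : cr t (φ j) (φ' j) = 1 := by
          unfold cr; rw [if_pos ⟨hx, hj, hb⟩]
        have := hcrj j
        have := cr_nonneg t (φ' j) (φ j)
        linarith
      · have h3 : 1/12 ≤ φ j - φ' j := by linarith
        have := hDj j
        have := ht2 j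
        nlinarith
  · rcases hF' with ⟨j, hj, hFj'⟩ | ⟨hn', hFe'⟩
    · have hx := hn j
      by_cases hb : φ' j < 5/6
      · have : cr t (φ' j) (φ j) = 1 := by
          unfold cr; rw [if_pos ⟨hx, hj, hb⟩]
        have := hcrj j
        have := cr_nonneg t (φ j) (φ' j)
        linarith
      · have h3 : 1/12 ≤ φ' j - φ j := by linarith
        have := hDj j
        have := ht2 j
        nlinarith
    · rw [if_pos (fun j => (hn j).trans_lt ht')]
      have : ∑ a, F a * F' a = ∑ a, Fs a * Fs' a :=
        sum_congr rfl fun a _ => by rw [hFe, hFe']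
      rw [this]
      linarith
end

open MeasureTheory in
lemma exists_t {K : Type} [Fintype K] (w a b : K → ℝ) (hw : ∀ k, 0 ≤ w k)
    (g : K → ℝ) (hg : ∀ k, 0 ≤ g k) (hg' : ∀ k, 2/3 < b k → b k < 5/6 → b k - a k ≤ g k) :
    ∃ t : ℝ, 2/3 ≤ t ∧ t < 3/4 ∧ ∑ k, w k * cr t (b k) (a k) ≤ 12 * ∑ k, w k * g k := by
  have hcr : ∀ k, (fun t => cr t (b k) (a k)) =
      Set.indicator (if b k < 5/6 then Set.Ico (a k) (b k) else ∅) (fun _ => (1:ℝ)) := by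
    intro k
    funext t
    unfold cr
    by_cases h : b k < 5/6
    · simp [h, Set.indicator_apply]
    · simp [h]
  have hms : ∀ k, MeasurableSet (if b k < 5/6 then Set.Ico (a k) (b k) else ∅) := by
    intro k; split_ifs <;> measurability
  have hint : ∀ k, IntegrableOn (fun t => cr t (b k) (a k)) (Set.Ico (2/3) (3/4)) := by
    intro k
    rw [hcr]
    exact (integrable_const (1:ℝ)).indicator (hms k)
  have hI : IntegrableOn (fun t => ∑ k, w k * cr t (b k) (a k)) (Set.Ico (2/3) (3/4)) := by
    refine integrable_finsetSum _ fun k _ => (hint k).const_mul _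
  have hv : volume.real (Set.Ico (2/3:ℝ) (3/4)) = 1/12 := by
    rw [Real.volume_real_Ico]; norm_num
  obtain ⟨t, ht, hle⟩ := exists_le_setAverage (μ := volume) (s := Set.Ico (2/3:ℝ) (3/4))
    (by simp; norm_num) (by simp) hI
  refine ⟨t, ht.1, ht.2, hle.trans ?_⟩
  rw [setAverage_eq, hv, integral_finsetSum _ fun k _ => (hint k).const_mul _, smul_eq_mul]
  have : ((1:ℝ)/12)⁻¹ = 12 := by norm_num
  rw [this]
  refine mul_le_mul_of_nonneg_left (sum_le_sum fun k _ => ?_) (by norm_num)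
  rw [integral_const_mul]
  refine mul_le_mul_of_nonneg_left ?_ (hw k)
  rw [hcr, integral_indicator (hms k), setIntegral_const, smul_eq_mul, mul_one,
    measureReal_restrict_apply (hms k)]
  by_cases h : b k < 5/6
  · rw [if_pos h]
    by_cases h2 : 2/3 < b k
    · by_cases h3 : a k ≤ b k
      · refine le_trans ?_ (hg' k h2 h)
        refine (measureReal_mono (Set.inter_subset_left) (by simp)).trans ?_
        rw [Real.volume_real_Ico_of_le h3]
      · rw [Set.Ico_eq_empty (by linarith)]
        simpa using hg k
    · have : Set.Ico (a k) (b k) ∩ Set.Ico (2/3) (3/4) = ∅ := by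
        ext x
        simp only [Set.mem_inter_iff, Set.mem_Ico, Set.mem_empty_iff_false, iff_false]
        rintro ⟨⟨_, h⟩, h', _⟩
        linarith
      rw [this]
      simpa using hg k
  · rw [if_neg h]
    simpa using hg k

lemma amgm (κ b a : ℝ) (hκ : 0 < κ) (h1 : 2/3 < b) (h2 : b < 5/6) :
    b - a ≤ κ / 2 * (b - a)^2 + 4 / κ * (b * (1 - b)) := by
  have : 5/36 ≤ b * (1-b) := by nlinarith
  have h3 : 1 / (2*κ) ≤ 4 / κ * (b * (1 - b)) := by
    rw [div_mul_eq_mul_div, div_le_div_iff₀ (by positivity) hκ]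
    nlinarith
  have h4 : b - a ≤ κ / 2 * (b - a)^2 + 1 / (2 * κ) := by
    have : κ / 2 * (b - a)^2 + 1 / (2 * κ) - (b - a) = (κ * (b-a) - 1)^2 / (2*κ) := by
      field_simp
      ring
    have : 0 ≤ (κ * (b-a) - 1)^2 / (2*κ) := by positivity
    linarith
  linarith


section
variable {X I : Type} [Fintype X] [Fintype I]

/-- weighted expectation -/
noncomputable def EE (p : I → ℝ) (q : X → X → ℝ) (F : I → X → X → ℝ) : ℝ :=
  ∑ i, ∑ x, ∑ y, p i * q x y * F i x y

lemma EE_mono (p : I → ℝ) (q : X → X → ℝ) (hp : ∀ i, 0 ≤ p i) (hq : ∀ x y, 0 ≤ q x y)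
    (F F' : I → X → X → ℝ) (h : ∀ i x y, F i x y ≤ F' i x y) : EE p q F ≤ EE p q F' := by
  unfold EE
  exact sum_le_sum fun i _ => sum_le_sum fun x _ => sum_le_sum fun y _ =>
    mul_le_mul_of_nonneg_left (h i x y) (mul_nonneg (hp i) (hq x y))

lemma EE_add (p : I → ℝ) (q : X → X → ℝ) (F F' : I → X → X → ℝ) :
    EE p q (fun i x y => F i x y + F' i x y) = EE p q F + EE p q F' := by
  unfold EE
  simp only [mul_add, sum_add_distrib]

lemma EE_sub (p : I → ℝ) (q : X → X → ℝ) (F F' : I → X → X → ℝ) :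
    EE p q (fun i x y => F i x y - F' i x y) = EE p q F - EE p q F' := by
  unfold EE
  simp only [mul_sub, sum_sub_distrib]

lemma EE_mul (p : I → ℝ) (q : X → X → ℝ) (c : ℝ) (F : I → X → X → ℝ) :
    EE p q (fun i x y => c * F i x y) = c * EE p q F := by
  unfold EE
  simp only [mul_sum]
  exact sum_congr rfl fun i _ => sum_congr rfl fun x _ => sum_congr rfl fun y _ => by ring

lemma EE_left (p : I → ℝ) (q : X → X → ℝ) (m : X → ℝ) (hq1 : ∀ x, ∑ y, q x y = m x)
    (F : I → X → ℝ) :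
    EE p q (fun i x _ => F i x) = ∑ x, m x * ∑ i, p i * F i x := by
  unfold EE
  rw [sum_comm]
  refine sum_congr rfl fun x _ => ?_
  rw [mul_sum]
  refine sum_congr rfl fun i _ => ?_
  rw [← sum_mul, ← mul_sum, hq1]; ring

lemma EE_right (p : I → ℝ) (q : X → X → ℝ) (m : X → ℝ) (hq2 : ∀ y, ∑ x, q x y = m y)
    (F : I → X → ℝ) :
    EE p q (fun i _ y => F i y) = ∑ x, m x * ∑ i, p i * F i x := by
  rw [← EE_left p (fun x y => q y x) m hq2]
  unfold EE
  exact sum_congr rfl fun i _ => sum_comm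

lemma EE_noi (p : I → ℝ) (q : X → X → ℝ) (F : I → X → X → ℝ) :
    EE p q F = ∑ x, ∑ y, q x y * ∑ i, p i * F i x y := by
  unfold EE
  rw [sum_comm]
  refine sum_congr rfl fun x _ => ?_
  rw [sum_comm]
  refine sum_congr rfl fun y _ => ?_
  rw [mul_sum]
  exact sum_congr rfl fun i _ => by ring

end

lemma round_exists {V A J : Type} [Fintype J] [Fintype A] [DecidableEq A]
    (h : J → V × A → ℝ) (hh0 : ∀ j p, 0 ≤ h j p) (fs : V × A → ℝ) (hfs0 : ∀ p, 0 ≤ fs p)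
    (hfs1 : ∀ v, ∑ β, fs (v, β) = 1) (t : ℝ) (ht : 0 ≤ t) :
    ∃ f : V × A → ℝ, (∀ p, 0 ≤ f p) ∧ (∀ v, ∑ β, f (v, β) = 1) ∧
      ∀ v (π : A → Option A), (∃ j, t < ∑ β, h j (v, β) ∧
        ∀ a, PP f v π a = PP (h j) v π a / ∑ β, h j (v, β)) ∨
        ((∀ j, ∑ β, h j (v, β) ≤ t) ∧ ∀ a, PP f v π a = PP fs v π a) := by
  classical
  let f : V × A → ℝ := fun p => if hj : ∃ j, t < ∑ β, h j (p.1, β) then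
    h hj.choose p / ∑ β, h hj.choose (p.1, β) else fs p
  refine ⟨f, ?_, ?_, ?_⟩
  · intro p
    simp only [f]
    split_ifs with hj
    · exact div_nonneg (hh0 _ _) (sum_nonneg fun _ _ => hh0 _ _)
    · exact hfs0 p
  · intro v
    by_cases hj : ∃ j, t < ∑ β, h j (v, β)
    · simp only [f, dif_pos hj]
      change ∑ x, h hj.choose (v, x) / (∑ y, h hj.choose (v, y)) = 1
      rw [← sum_div, div_self]
      exact (ht.trans_lt hj.choose_spec).ne'
    · simp only [f, dif_neg hj]
      exact hfs1 v
  · intro v π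
    by_cases hj : ∃ j, t < ∑ β, h j (v, β)
    · left
      refine ⟨hj.choose, hj.choose_spec, fun a => ?_⟩
      simp only [PP, f, dif_pos hj]
      rw [sum_div]
      refine sum_congr rfl fun β _ => ?_
      split_ifs <;> simp
    · right
      refine ⟨fun j => not_lt.1 fun hh => hj ⟨j, hh⟩, fun a => ?_⟩
      simp only [PP, f, dif_neg hj]

lemma core {X V A I J : Type} [Fintype X] [Fintype A] [Fintype I] [Fintype J] [DecidableEq A]
    (q : X → X → ℝ) (hq : ∀ x y, 0 ≤ q x y) (m : X → ℝ) (hq1 : ∀ x, ∑ y, q x y = m x)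
    (hq2 : ∀ y, ∑ x, q x y = m y) (hm : ∑ x, m x = 1)
    (vx : X → V) (πx : X → A → Option A) (ε : ℝ)
    (hε : ∀ f : V × A → ℝ, (∀ p, 0 ≤ f p) → (∀ v, ∑ β, f (v, β) = 1) →
      ε ≤ 1 - ∑ x, ∑ y, q x y * ∑ α, PP f (vx x) (πx x) α * PP f (vx y) (πx y) α)
    (fs : V × A → ℝ) (hfs0 : ∀ p, 0 ≤ fs p) (hfs1 : ∀ v, ∑ β, fs (v, β) = 1)
    (hfs2 : 1 - ∑ x, ∑ y, q x y * ∑ α, PP fs (vx x) (πx x) α * PP fs (vx y) (πx y) α ≤ 2 * ε)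
    (p : I → ℝ) (hp0 : ∀ i, 0 ≤ p i) (hp1 : ∑ i, p i = 1)
    (h : I → J → V × A → ℝ) (hh0 : ∀ i j p, 0 ≤ h i j p)
    (hh1 : ∀ i v, ∑ j, ∑ β, h i j (v, β) ≤ 1) (δ δ' : ℝ)
    (hδ' : ∀ v, ∑ i, p i * ∑ j, (∑ β, h i j (v, β)) ^ 2 ≤ 1 - δ')
    (h0 : 0 ≤ δ') (h16 : δ' ≤ 1/16)
    (hδ : ∑ i, p i * ∑ j, ∑ x, ∑ y, q x y *
      ∑ α, PP (h i j) (vx x) (πx x) α * PP (h i j) (vx y) (πx y) α = 1 - δ)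
    (κ : ℝ) (hκ : 0 < κ) :
    0 ≤ δ - δ' ∧ ε / 2 ≤ 292 * (δ - δ') + 24 * κ * (δ - δ') + 96 * δ / κ := by
  classical
  set Φ : I → X → J → ℝ := fun i x j => ∑ β, h i j (vx x, β) with hΦ
  set HH : I → X → J → A → ℝ := fun i x j α => PP (h i j) (vx x) (πx x) α with hHH
  have HH0 : ∀ i x j a, 0 ≤ HH i x j a := fun i x j a => PP_nonneg _ (hh0 i j) _ _ _
  have HHs : ∀ i x j, ∑ a, HH i x j a ≤ Φ i x j := fun i x j => PP_sum_le _ (hh0 i j) _ _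
  have Φ0 : ∀ i x j, 0 ≤ Φ i x j := fun i x j => sum_nonneg fun _ _ => hh0 _ _ _
  have Φs : ∀ i x, ∑ j, Φ i x j ≤ 1 := fun i x => hh1 i (vx x)
  have Φ1 : ∀ i x j, Φ i x j ≤ 1 := fun i x j =>
    (single_le_sum (f := Φ i x) (fun j _ => Φ0 i x j) (mem_univ j)).trans (Φs i x)
  have m0 : ∀ x, 0 ≤ m x := fun x => hq1 x ▸ sum_nonneg fun y _ => hq x y
  set D : I → X → X → ℝ := fun i x y => DD (Φ i x) (Φ i y) (HH i x) (HH i y) with hD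
  set N : X → ℝ := fun x => ∑ i, p i * ∑ j, (Φ i x j)^2 with hN
  have hN1 : ∀ x, N x ≤ 1 - δ' := fun x => hδ' (vx x)
  set EN : ℝ := ∑ x, m x * N x with hEN
  have hENle : EN ≤ 1 - δ' := by
    calc EN ≤ ∑ x, m x * (1 - δ') := sum_le_sum fun x _ => mul_le_mul_of_nonneg_left (hN1 x) (m0 x)
      _ = 1 - δ' := by rw [← sum_mul, hm, one_mul]
  have hWD : EE p q D = EN - (1 - δ) := by
    have e1 := EE_left p q m hq1 (fun i x => ∑ j, (Φ i x j)^2)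
    have e2 := EE_right p q m hq2 (fun i x => ∑ j, (Φ i x j)^2)
    have e3 : EE p q (fun i x y => ∑ j, ∑ α, HH i x j α * HH i y j α) = 1 - δ := by
      rw [← hδ]
      unfold EE
      refine sum_congr rfl fun i _ => ?_
      rw [mul_sum]
      simp only [mul_sum]
      rw [sum_comm (s := (univ : Finset J))]
      refine sum_congr rfl fun x _ => ?_
      rw [sum_comm (s := (univ : Finset J))]
      refine sum_congr rfl fun y _ => sum_congr rfl fun j _ => sum_congr rfl fun a _ => ?_
      ring
    have : D = fun i x y => (1/2) * ((∑ j, (Φ i x j)^2) + ∑ j, (Φ i y j)^2) -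
        ∑ j, ∑ α, HH i x j α * HH i y j α := rfl
    rw [this, EE_sub, EE_mul, EE_add, e1, e2, e3]
    ring
  have D0 : ∀ i x y, 0 ≤ D i x y := fun i x y =>
    DD_nonneg _ _ _ _ (HH0 i x) (HH0 i y) (HHs i x) (HHs i y)
  have hWD0 : 0 ≤ EE p q D := sum_nonneg fun i _ => sum_nonneg fun x _ => sum_nonneg fun y _ =>
    mul_nonneg (mul_nonneg (hp0 i) (hq x y)) (D0 i x y)
  refine ⟨by linarith, ?_⟩
  -- crossing
  obtain ⟨t, ht1, ht2, hcross⟩ : ∃ t : ℝ, 2/3 ≤ t ∧ t < 3/4 ∧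
      EE p q (fun i x y => ∑ j, (cr t (Φ i x j) (Φ i y j) + cr t (Φ i y j) (Φ i x j))) ≤
      24 * κ * EE p q D + 96 / κ * (1 - EN) := by
    obtain ⟨t, ht1, ht2, hle⟩ := exists_t (K := I × X × X × J × Bool)
      (fun k => p k.1 * q k.2.1 k.2.2.1)
      (fun k => if k.2.2.2.2 then Φ k.1 k.2.2.1 k.2.2.2.1 else Φ k.1 k.2.1 k.2.2.2.1)
      (fun k => if k.2.2.2.2 then Φ k.1 k.2.1 k.2.2.2.1 else Φ k.1 k.2.2.1 k.2.2.2.1)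
      (fun k => mul_nonneg (hp0 _) (hq _ _))
      (fun k => if k.2.2.2.2 then
          κ / 2 * (Φ k.1 k.2.1 k.2.2.2.1 - Φ k.1 k.2.2.1 k.2.2.2.1)^2 +
            4 / κ * (Φ k.1 k.2.1 k.2.2.2.1 * (1 - Φ k.1 k.2.1 k.2.2.2.1))
        else κ / 2 * (Φ k.1 k.2.2.1 k.2.2.2.1 - Φ k.1 k.2.1 k.2.2.2.1)^2 +
            4 / κ * (Φ k.1 k.2.2.1 k.2.2.2.1 * (1 - Φ k.1 k.2.2.1 k.2.2.2.1)))
      (by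
        rintro ⟨i, x, y, j, b⟩
        have := mul_nonneg (Φ0 i x j) (sub_nonneg.2 (Φ1 i x j))
        have := mul_nonneg (Φ0 i y j) (sub_nonneg.2 (Φ1 i y j))
        cases b <;> simp only [if_true, if_false, Bool.false_eq_true] <;> positivity)
      (by
        rintro ⟨i, x, y, j, b⟩
        cases b <;> simp only [if_true, if_false, Bool.false_eq_true] <;> intro h1 h2 <;>
          exact amgm _ _ _ hκ h1 h2)
    refine ⟨t, ht1, ht2, ?_⟩
    simp only [Fintype.sum_prod_type, Fintype.sum_bool, if_true, if_false, Bool.false_eq_true] at hle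
    have l1 : EE p q (fun i x y => ∑ j, (cr t (Φ i x j) (Φ i y j) + cr t (Φ i y j) (Φ i x j))) =
        ∑ i, ∑ x, ∑ y, ∑ j, (p i * q x y * cr t (Φ i x j) (Φ i y j) +
          p i * q x y * cr t (Φ i y j) (Φ i x j)) := by
      unfold EE
      simp only [mul_sum, mul_add]
    rw [l1]
    refine hle.trans ?_
    have l2 : (∑ i, ∑ x, ∑ y, ∑ j, (p i * q x y * (κ / 2 * (Φ i x j - Φ i y j)^2 +
            4 / κ * (Φ i x j * (1 - Φ i x j))) + p i * q x y * (κ / 2 * (Φ i y j - Φ i x j)^2 +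
            4 / κ * (Φ i y j * (1 - Φ i y j))))) =
        EE p q (fun i x y => ∑ j, (κ * (Φ i x j - Φ i y j)^2 +
          (4 / κ * (Φ i x j * (1 - Φ i x j)) + 4 / κ * (Φ i y j * (1 - Φ i y j))))) := by
      unfold EE
      simp only [mul_sum]
      exact sum_congr rfl fun i _ => sum_congr rfl fun x _ => sum_congr rfl fun y _ =>
        sum_congr rfl fun j _ => by ring
    rw [l2]
    have l3 : EE p q (fun i x y => ∑ j, (κ * (Φ i x j - Φ i y j)^2 +
          (4 / κ * (Φ i x j * (1 - Φ i x j)) + 4 / κ * (Φ i y j * (1 - Φ i y j))))) ≤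
        EE p q (fun i x y => (2 * κ) * D i x y + (4 / κ * (1 - ∑ j, (Φ i x j)^2) +
          4 / κ * (1 - ∑ j, (Φ i y j)^2))) := by
      refine EE_mono p q hp0 hq _ _ fun i x y => ?_
      have a1 := DD_ge_sq _ _ _ _ (HH0 i x) (HH0 i y) (HHs i x) (HHs i y)
      have a2 : ∀ x, ∑ j, (Φ i x j * (1 - Φ i x j)) ≤ 1 - ∑ j, (Φ i x j)^2 := by
        intro x
        have : ∑ j, (Φ i x j * (1 - Φ i x j)) = ∑ j, Φ i x j - ∑ j, (Φ i x j)^2 := by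
          rw [← sum_sub_distrib]
          exact sum_congr rfl fun j _ => by ring
        rw [this]
        have := Φs i x
        linarith
      rw [sum_add_distrib, sum_add_distrib, ← mul_sum, ← mul_sum, ← mul_sum]
      have b1 := mul_le_mul_of_nonneg_left a1 hκ.le
      have b2 := mul_le_mul_of_nonneg_left (a2 x) (show 0 ≤ 4 / κ by positivity)
      have b3 := mul_le_mul_of_nonneg_left (a2 y) (show 0 ≤ 4 / κ by positivity)
      have : D i x y = DD (Φ i x) (Φ i y) (HH i x) (HH i y) := rfl
      rw [← this] at b1
      linarith
    have l4 : ∑ x, m x * ∑ i, p i * (1 - ∑ j, (Φ i x j)^2) = 1 - EN := by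
      have : ∀ x, ∑ i, p i * (1 - ∑ j, (Φ i x j)^2) = 1 - N x := by
        intro x
        simp only [mul_sub, sum_sub_distrib, mul_one, hp1, hN]
      simp only [this]
      simp only [mul_sub, sum_sub_distrib, mul_one, hm, hEN]
    rw [EE_add, EE_add, EE_mul, EE_mul, EE_mul, EE_left p q m hq1 (fun i x => 1 - ∑ j, (Φ i x j)^2),
      EE_right p q m hq2 (fun i x => 1 - ∑ j, (Φ i x j)^2), l4] at l3
    calc _ ≤ _ := mul_le_mul_of_nonneg_left l3 (by norm_num)
      _ = _ := by ring
  -- rounding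
  choose f hf0 hf1 hf2 using fun i => round_exists (h i) (hh0 i) fs hfs0 hfs1 t (by linarith)
  set ls : X → X → ℝ := fun x y => 1 - ∑ a, PP fs (vx x) (πx x) a * PP fs (vx y) (πx y) a with hls
  have hqs : ∑ x, ∑ y, q x y = 1 := by simp only [hq1, hm]
  have hls0 : ∀ x y, 0 ≤ ls x y := fun x y => by
    have := mul_sum_le_one (PP fs (vx x) (πx x)) (PP fs (vx y) (πx y)) (PP_nonneg _ hfs0 _ _)
      (PP_nonneg _ hfs0 _ _) ((PP_sum_le _ hfs0 _ _).trans (hfs1 _).le)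
      ((PP_sum_le _ hfs0 _ _).trans (hfs1 _).le)
    simp only [hls]; linarith
  have hls1 : ∀ x y, ls x y ≤ 1 := fun x y => by
    have : 0 ≤ ∑ a, PP fs (vx x) (πx x) a * PP fs (vx y) (πx y) a :=
      sum_nonneg fun a _ => mul_nonneg (PP_nonneg _ hfs0 _ _ _) (PP_nonneg _ hfs0 _ _ _)
    simp only [hls]; linarith
  have hlsum : ∑ x, ∑ y, q x y * ls x y ≤ 2 * ε := by
    refine le_trans (le_of_eq ?_) hfs2
    simp only [hls, mul_sub, sum_sub_distrib, mul_one, hqs]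
  have hpw := EE_mono p q hp0 hq
    (fun i x y => 1 - ∑ a, PP (f i) (vx x) (πx x) a * PP (f i) (vx y) (πx y) a)
    (fun i x y => 288 * D i x y + ∑ j, (cr t (Φ i x j) (Φ i y j) + cr t (Φ i y j) (Φ i x j))
      + (if ∀ j, Φ i x j < 3/4 then 1 else 0) * ls x y)
    (fun i x y => pw (Φ i x) (Φ i y) (HH i x) (HH i y) (HH0 i x) (HH0 i y) (HHs i x) (HHs i y)
      (Φs i x) (Φs i y) t ht1 ht2 _ _ (PP fs (vx x) (πx x)) (PP fs (vx y) (πx y))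
      (PP_nonneg _ hfs0 _ _) (PP_nonneg _ hfs0 _ _)
      (PP_nonneg _ (hf0 i) _ _) (PP_nonneg _ (hf0 i) _ _)
      ((PP_sum_le _ hfs0 _ _).trans (hfs1 _).le) ((PP_sum_le _ hfs0 _ _).trans (hfs1 _).le)
      (hf2 i (vx x) (πx x)) (hf2 i (vx y) (πx y)))
  have hlow : ε ≤ EE p q
      (fun i x y => 1 - ∑ a, PP (f i) (vx x) (πx x) a * PP (f i) (vx y) (πx y) a) := by
    have : ε = ∑ i, p i * ε := by rw [← sum_mul, hp1, one_mul]
    rw [this]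
    unfold EE
    refine sum_le_sum fun i _ => ?_
    refine (mul_le_mul_of_nonneg_left (hε (f i) (hf0 i) (hf1 i)) (hp0 i)).trans (le_of_eq ?_)
    nth_rewrite 1 [← hqs]
    rw [← sum_sub_distrib, mul_sum]
    refine sum_congr rfl fun x _ => ?_
    rw [← sum_sub_distrib, mul_sum]
    exact sum_congr rfl fun y _ => by ring
  have hund : EE p q (fun i x y => (if ∀ j, Φ i x j < 3/4 then 1 else 0) * ls x y) ≤
      4 * δ' * (2 * ε) + 4 * (1 - δ' - EN) := by
    have u1 : ∀ x, ∑ i, p i * (if ∀ j, Φ i x j < 3/4 then (1:ℝ) else 0) ≤ 4 * (1 - N x) := by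
      intro x
      have : 4 * (1 - N x) = ∑ i, p i * (4 * (1 - ∑ j, (Φ i x j)^2)) := by
        simp only [mul_sub, sum_sub_distrib, mul_one, hN, mul_sum, ← sum_mul, hp1]
        simp only [one_mul]
        congr 1
        exact sum_congr rfl fun i _ => sum_congr rfl fun j _ => by ring
      rw [this]
      refine sum_le_sum fun i _ => mul_le_mul_of_nonneg_left ?_ (hp0 i)
      split_ifs with hc
      · have : ∑ j, (Φ i x j)^2 ≤ ∑ j, 3/4 * Φ i x j := sum_le_sum fun j _ => by
          nlinarith [hc j, Φ0 i x j]
        rw [← mul_sum] at this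
        have := Φs i x
        linarith
      · have : ∑ j, (Φ i x j)^2 ≤ ∑ j, Φ i x j := sum_le_sum fun j _ => by
          nlinarith [Φ1 i x j, Φ0 i x j]
        have := Φs i x
        linarith
    rw [EE_noi]
    calc _ ≤ ∑ x, ∑ y, (4 * δ' * (q x y * ls x y) + 4 * (q x y * (1 - δ' - N x))) := by
          refine sum_le_sum fun x _ => sum_le_sum fun y _ => ?_
          have e : ∑ i, p i * ((if ∀ j, Φ i x j < 3/4 then (1:ℝ) else 0) * ls x y) =
              ls x y * ∑ i, p i * (if ∀ j, Φ i x j < 3/4 then (1:ℝ) else 0) := by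
            rw [mul_sum]; exact sum_congr rfl fun i _ => by ring
          rw [e]
          have e2 : ls x y * ∑ i, p i * (if ∀ j, Φ i x j < 3/4 then (1:ℝ) else 0) ≤
              4 * δ' * ls x y + 4 * (1 - δ' - N x) := by
            have i1 := mul_le_mul_of_nonneg_left (u1 x) (hls0 x y)
            have i2 := mul_le_mul_of_nonneg_right (hls1 x y) (sub_nonneg.2 (hN1 x))
            linarith
          have := mul_le_mul_of_nonneg_left e2 (hq x y)
          linarith
      _ = 4 * δ' * (∑ x, ∑ y, q x y * ls x y) + 4 * (1 - δ' - EN) := by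
          simp only [sum_add_distrib, ← mul_sum]
          congr 2
          have : ∀ x, ∑ y, q x y * (1 - δ' - N x) = m x * (1 - δ') - m x * N x := by
            intro x
            rw [← sum_mul, hq1, mul_sub]
          simp only [this, sum_sub_distrib, ← sum_mul, hm, hEN, one_mul]
      _ ≤ _ := by
          have := mul_le_mul_of_nonneg_left hlsum (show 0 ≤ 4 * δ' by linarith)
          linarith
  have hε0 : 0 ≤ ε := by
    have : 0 ≤ ∑ x, ∑ y, q x y * ls x y :=
      sum_nonneg fun x _ => sum_nonneg fun y _ => mul_nonneg (hq x y) (hls0 x y)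
    linarith
  rw [EE_add, EE_add, EE_mul] at hpw
  have k1 : 96 / κ * (1 - EN) ≤ 96 * δ / κ := by
    rw [div_mul_eq_mul_div]
    gcongr
    linarith
  have k2 : 24 * κ * EE p q D ≤ 24 * κ * (δ - δ') := by
    gcongr
    linarith
  have k3 : 4 * δ' * (2 * ε) ≤ ε / 2 := by nlinarith
  linarith

lemma core' (ε δ δ' : ℝ) (hε : 0 < ε) (h0 : 0 ≤ δ') (h : ∀ κ : ℝ, 0 < κ →
    0 ≤ δ - δ' ∧ ε / 2 ≤ 292 * (δ - δ') + 24 * κ * (δ - δ') + 96 * δ / κ) :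
    δ' ≤ δ ∧ (1/2400)^2 * ε^2 ≤ δ * (δ - δ') := by
  have hτ := (h 1 one_pos).1
  refine ⟨by linarith, ?_⟩
  have hδ0 : 0 ≤ δ := by linarith
  rcases hδ0.eq_or_lt with hd | hd
  · have := (h 1 one_pos).2
    rw [← hd] at this hτ
    have : δ' = 0 := by linarith
    subst this
    linarith
  · have h2 := (h (384 * δ / ε) (by positivity)).2
    have e1 : 96 * δ / (384 * δ / ε) = ε / 4 := by field_simp; norm_num
    rw [e1] at h2
    by_cases hc : ε / 8 ≤ 292 * (δ - δ')
    · have : ε / 2400 ≤ δ - δ' := by linarith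
      have : (ε / 2400) * (ε / 2400) ≤ δ * (δ - δ') :=
        mul_le_mul (by linarith) this (by positivity) hd.le
      linarith
    · have e2 : 24 * (384 * δ / ε) * (δ - δ') = 9216 * (δ * (δ - δ')) / ε := by field_simp; ring
      rw [e2] at h2
      have : ε / 8 ≤ 9216 * (δ * (δ - δ')) / ε := by linarith
      rw [le_div_iff₀ hε] at this
      nlinarith

section games
open ProjGame

variable (G : ProjGame)

abbrev XX : Type := G.Q1 × G.Q2 × (G.A → Option G.A)

noncomputable def qq (x y : XX G) : ℝ := if x.1 = y.1 then G.μ x * G.μ y / G.wU x.1 else 0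

lemma wU_eq (u : G.Q1) : G.wU u = ∑ x : XX G, if x.1 = u then G.μ x else 0 := by
  unfold ProjGame.wU
  rw [Fintype.sum_prod_type]
  simp only [Fintype.sum_prod_type]
  rw [Finset.sum_eq_single u]
  · simp
  · intro b _ hb; simp [hb]
  · simp

lemma op_eq (f : G.Q2 × G.A → ℝ) (u : G.Q1) (α : G.A) : G.op f (u, α) =
    (∑ x : XX G, if x.1 = u then G.μ x * PP f x.2.1 x.2.2 α else 0) / G.wU u := by
  unfold ProjGame.op
  congr 1
  rw [Fintype.sum_prod_type]
  simp only [Fintype.sum_prod_type]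
  rw [Finset.sum_eq_single u]
  · simp [PP]
  · intro b _ hb; simp [hb]
  · simp

lemma wU_nonneg (u : G.Q1) : 0 ≤ G.wU u :=
  sum_nonneg fun _ _ => sum_nonneg fun _ _ => G.μ_nonneg _

lemma wU_sum : ∑ u, G.wU u = 1 := by
  rw [← G.μ_sum]
  simp only [ProjGame.wU, Fintype.sum_prod_type]

lemma qq_nonneg (x y : XX G) : 0 ≤ qq G x y := by
  unfold qq
  split_ifs
  · exact div_nonneg (mul_nonneg (G.μ_nonneg _) (G.μ_nonneg _)) (wU_nonneg G _)
  · exact le_rfl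

lemma qq_symm (x y : XX G) : qq G x y = qq G y x := by
  unfold qq
  by_cases h : x.1 = y.1
  · rw [if_pos h, if_pos h.symm, h, mul_comm]
  · rw [if_neg h, if_neg (Ne.symm h)]

lemma qq_left (x : XX G) : ∑ y, qq G x y = G.μ x := by
  have : ∑ y, qq G x y = G.μ x * G.wU x.1 / G.wU x.1 := by
    rw [wU_eq G x.1, mul_sum, sum_div]
    refine sum_congr rfl fun y _ => ?_
    unfold qq
    by_cases h : x.1 = y.1
    · rw [if_pos h, if_pos h.symm, wU_eq]
    · rw [if_neg h, if_neg (Ne.symm h)]; simp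
  rw [this]
  by_cases h : G.wU x.1 = 0
  · rw [h]
    have : G.μ x ≤ G.wU x.1 := by
      rw [wU_eq]
      have := single_le_sum (f := fun y : XX G => if y.1 = x.1 then G.μ y else 0)
        (fun y _ => by split_ifs; exacts [G.μ_nonneg _, le_rfl]) (mem_univ x)
      simpa using this
    have := G.μ_nonneg x
    simp; linarith
  · field_simp

lemma qq_right (y : XX G) : ∑ x, qq G x y = G.μ y := by
  simp only [qq_symm G _ y, qq_left]

lemma norm_eq (f : G.Q2 × G.A → ℝ) : G.normUsq (G.op f) =
    ∑ x, ∑ y, qq G x y * ∑ α, PP f x.2.1 x.2.2 α * PP f y.2.1 y.2.2 α := by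
  unfold ProjGame.normUsq
  have h1 : ∀ u, G.wU u * ∑ α, (G.op f (u, α))^2 = ∑ x : XX G, ∑ y : XX G,
      if x.1 = u then (if y.1 = u then
        G.μ x * G.μ y / G.wU u * ∑ α, PP f x.2.1 x.2.2 α * PP f y.2.1 y.2.2 α else 0) else 0 := by
    intro u
    have h2 : ∀ α, G.wU u * (G.op f (u, α))^2 = ∑ x : XX G, ∑ y : XX G,
      if x.1 = u then (if y.1 = u then
        G.μ x * G.μ y / G.wU u * (PP f x.2.1 x.2.2 α * PP f y.2.1 y.2.2 α) else 0) else 0 := by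
      intro α
      rw [op_eq]
      have : ∀ a w : ℝ, w * (a / w)^2 = a * a / w := by
        intro a w
        by_cases hw : w = 0
        · simp [hw]
        · field_simp
      rw [this, sum_mul_sum, sum_div]
      refine sum_congr rfl fun x _ => ?_
      rw [sum_div]
      refine sum_congr rfl fun y _ => ?_
      split_ifs <;> ring
    rw [mul_sum]
    simp only [h2]
    rw [sum_comm]
    refine sum_congr rfl fun x _ => ?_
    rw [sum_comm]
    refine sum_congr rfl fun y _ => ?_
    split_ifs
    · rw [mul_sum]
    · simp
    · simp
  simp only [h1]
  rw [sum_comm]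
  refine sum_congr rfl fun x _ => ?_
  rw [sum_comm]
  refine sum_congr rfl fun y _ => ?_
  rw [sum_ite_eq]
  unfold qq
  by_cases h : x.1 = y.1
  · simp [h]
  · simp [h, Ne.symm h]

lemma op_nonneg (f : G.Q2 × G.A → ℝ) (hf : ∀ p, 0 ≤ f p) (p) : 0 ≤ G.op f p := by
  obtain ⟨u, α⟩ := p
  rw [op_eq]
  refine div_nonneg (sum_nonneg fun x _ => ?_) (wU_nonneg G u)
  split_ifs
  · exact mul_nonneg (G.μ_nonneg _) (PP_nonneg _ hf _ _ _)
  · exact le_rfl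

lemma op_sum_le (f : G.Q2 × G.A → ℝ) (hf : G.IsBob f) (u) : ∑ α, G.op f (u, α) ≤ 1 := by
  simp only [op_eq]
  rw [← sum_div]
  refine div_le_one_of_le₀ ?_ (wU_nonneg G u)
  rw [sum_comm, wU_eq]
  refine sum_le_sum fun x _ => ?_
  split_ifs
  · rw [← mul_sum]
    refine mul_le_of_le_one_right (G.μ_nonneg _) ?_
    exact (PP_sum_le _ hf.1 _ _).trans (hf.2 _).le
  · simp

lemma op_sum {K : Type} [Fintype K] (f : K → G.Q2 × G.A → ℝ) (p) :
    ∑ k, G.op (f k) p = G.op (fun r => ∑ k, f k r) p := by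
  obtain ⟨u, α⟩ := p
  simp only [op_eq]
  rw [← sum_div, sum_comm]
  congr 1
  refine sum_congr rfl fun x _ => ?_
  split_ifs
  · rw [← mul_sum]
    congr 1
    unfold PP
    rw [sum_comm]
    refine sum_congr rfl fun β _ => ?_
    split_ifs <;> simp
  · simp

lemma normU_nonneg (g : G.Q1 × G.A → ℝ) : 0 ≤ G.normUsq g :=
  sum_nonneg fun u _ => mul_nonneg (wU_nonneg G u) (sum_nonneg fun _ _ => sq_nonneg _)

lemma inn_le_one (f g) (hf : G.IsBob f) (hg : G.IsAlice g) : G.inn g (G.op f) ≤ 1 := by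
  rw [← wU_sum G]
  unfold ProjGame.inn
  refine sum_le_sum fun u _ => mul_le_of_le_one_right (wU_nonneg G u) ?_
  exact mul_sum_le_one (fun α => g (u, α)) (fun α => G.op f (u, α)) (fun _ => hg.1 _)
    (fun _ => op_nonneg G f hf.1 _) (hg.2 u).le (op_sum_le G f hf u)

lemma norm_le_val (f) (hf : G.IsBob f) : G.normUsq (G.op f) ≤ G.val := by
  obtain ⟨a0⟩ := G.neA
  -- complete the sub-assignment `Gf`
  let g : G.Q1 × G.A → ℝ := fun p =>
    G.op f p + (if p.2 = a0 then 1 - ∑ α, G.op f (p.1, α) else 0)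
  have hge : ∀ p, G.op f p ≤ g p := by
    intro p
    simp only [g]
    split_ifs
    · have := op_sum_le G f hf p.1
      linarith
    · simp
  have hg : G.IsAlice g := by
    refine ⟨fun p => (op_nonneg G f hf.1 p).trans (hge p), fun u => ?_⟩
    simp [g, sum_add_distrib]
  have h1 : G.normUsq (G.op f) ≤ G.inn g (G.op f) := by
    unfold ProjGame.normUsq ProjGame.inn
    refine sum_le_sum fun u _ => mul_le_mul_of_nonneg_left (sum_le_sum fun α _ => ?_) (wU_nonneg G u)
    rw [sq]
    exact mul_le_mul_of_nonneg_right (hge _) (op_nonneg G f hf.1 _)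
  refine h1.trans (le_csSup ⟨1, ?_⟩ ⟨f, g, hf, hg, rfl⟩)
  rintro x ⟨f, g, hf, hg, rfl⟩
  exact inn_le_one G f g hf hg

lemma exists_bob : ∃ f, G.IsBob f := by
  obtain ⟨a0⟩ := G.neA
  refine ⟨fun p => if p.2 = a0 then 1 else 0, fun p => ?_, fun v => ?_⟩
  · dsimp only; split_ifs <;> norm_num
  · simp

lemma exists_alice : ∃ f, G.IsAlice f := by
  obtain ⟨a0⟩ := G.neA
  refine ⟨fun p => if p.2 = a0 then 1 else 0, fun p => ?_, fun v => ?_⟩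
  · dsimp only; split_ifs <;> norm_num
  · simp

lemma val_le (δ : ℝ) (h : ∀ f, G.IsBob f → G.normUsq (G.op f) ≤ 1 - δ) :
    G.val ≤ 1 - δ / 2 := by
  obtain ⟨f0, hf0⟩ := exists_bob G
  obtain ⟨g0, hg0⟩ := exists_alice G
  refine csSup_le ⟨_, f0, g0, hf0, hg0, rfl⟩ ?_
  rintro x ⟨f, g, hf, hg, rfl⟩
  have h1 : ∀ u, 2 * ∑ α, g (u, α) * G.op f (u, α) ≤ 1 + ∑ α, (G.op f (u, α))^2 := by
    intro u
    have a1 : ∑ α, g (u, α) * g (u, α) ≤ 1 :=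
      mul_sum_le_one (fun α => g (u, α)) (fun α => g (u, α)) (fun _ => hg.1 _)
        (fun _ => hg.1 _) (hg.2 u).le (hg.2 u).le
    have a2 : ∑ α, 2 * (g (u, α) * G.op f (u, α)) ≤
        ∑ α, (g (u, α) * g (u, α) + (G.op f (u, α))^2) := sum_le_sum fun α _ => by
      nlinarith [sq_nonneg (g (u, α) - G.op f (u, α))]
    rw [← mul_sum, sum_add_distrib] at a2
    linarith
  have h2 : 2 * G.inn g (G.op f) ≤ 1 + G.normUsq (G.op f) := by
    unfold ProjGame.inn ProjGame.normUsq
    rw [mul_sum]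
    nth_rewrite 1 [← wU_sum G]
    rw [← sum_add_distrib]
    refine sum_le_sum fun u _ => ?_
    have := mul_le_mul_of_nonneg_left (h1 u) (wU_nonneg G u)
    linarith
  have := h f hf
  linarith

variable (H : ProjGame)

lemma tensor_sum (F : XX (G.tensor H) → ℝ) : ∑ x, (G.tensor H).μ x * F x =
    ∑ y : XX G, ∑ z : XX H, G.μ y * H.μ z *
      F ((y.1, z.1), (y.2.1, z.2.1), tensorC y.2.2 z.2.2) := by
  have : ∀ x, (G.tensor H).μ x * F x = ∑ y : XX G × XX H,
      if (((y.1.1, y.2.1), (y.1.2.1, y.2.2.1), tensorC y.1.2.2 y.2.2.2) : XX (G.tensor H)) = x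
      then G.μ y.1 * H.μ y.2 * F x else 0 := by
    intro x
    change (∑ y : XX G × XX H,
      if (((y.1.1, y.2.1), (y.1.2.1, y.2.2.1), tensorC y.1.2.2 y.2.2.2) : XX (G.tensor H)) = x
      then G.μ y.1 * H.μ y.2 else 0) * F x = _
    rw [sum_mul]
    refine sum_congr rfl fun y _ => ?_
    split_ifs <;> simp
  simp only [this]
  rw [sum_comm]
  simp only [sum_ite_eq, mem_univ, if_true]
  rw [Fintype.sum_prod_type]

lemma tensor_wU (u : G.Q1) (u' : H.Q1) :
    (G.tensor H).wU (u, u') = G.wU u * H.wU u' := by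
  suffices gen : ∀ w : (G.tensor H).Q1, w = (u, u') → (G.tensor H).wU w = G.wU u * H.wU u' from
    gen _ rfl
  intro w hw
  rw [wU_eq, wU_eq, wU_eq, sum_mul_sum]
  have := tensor_sum G H (fun x => if x.1 = w then 1 else 0)
  simp only [mul_ite, mul_one, mul_zero] at this
  refine this.trans ?_
  refine sum_congr rfl fun y _ => sum_congr rfl fun z _ => ?_
  by_cases h1 : y.1 = u
  · by_cases h2 : z.1 = u'
    · rw [if_pos h1, if_pos h2, if_pos (by rw [h1, h2]; exact hw.symm)]
    · rw [if_neg h2, if_neg (fun h => h2 (congrArg Prod.snd (h.trans hw))), mul_zero]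
  · rw [if_neg h1, if_neg (fun h => h1 (congrArg Prod.fst (h.trans hw))), zero_mul]

lemma tensorC_iff {A A' : Type} (π : A → Option A) (π' : A' → Option A') (b : A × A') (α α') :
    tensorC π π' b = some (α, α') ↔ π b.1 = some α ∧ π' b.2 = some α' := by
  unfold tensorC
  cases h : π b.1 <;> cases h' : π' b.2 <;> simp

/-- slices of a function on the product -/
def sl (f : (G.Q2 × H.Q2) × (G.A × H.A) → ℝ) (p : G.Q2 × G.A) (r : H.Q2 × H.A) : ℝ :=
  f ((p.1, r.1), (p.2, r.2))

lemma PP_tensor (f : (G.Q2 × H.Q2) × (G.A × H.A) → ℝ) (v v' π π' α α') :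
    PP f (v, v') (tensorC π π') (α, α') =
      PP (fun p : G.Q2 × G.A => PP (sl G H f p) v' π' α') v π α := by
  unfold PP
  rw [Fintype.sum_prod_type]
  refine sum_congr rfl fun β _ => ?_
  simp only [tensorC_iff]
  by_cases h : π β = some α
  · simp only [h, true_and, if_true, sl]
  · simp [h]

lemma PP_lin {V A K : Type} [Fintype A] [DecidableEq A] [Fintype K] (c : K → ℝ) (d : ℝ)
    (F : K → V × A → ℝ) (v : V) (π : A → Option A) (α : A) :
    PP (fun p => (∑ k, c k * F k p) / d) v π α = (∑ k, c k * PP (F k) v π α) / d := by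
  unfold PP
  simp only [mul_sum]
  rw [sum_comm, sum_div]
  refine sum_congr rfl fun β _ => ?_
  split_ifs <;> simp

lemma tensor_op (f : (G.Q2 × H.Q2) × (G.A × H.A) → ℝ) (u u' α α') :
    (G.tensor H).op f ((u, u'), (α, α')) =
      G.op (fun p => H.op (sl G H f p) (u', α')) (u, α) := by
  suffices gen : ∀ (F : (G.tensor H).Q2 × (G.tensor H).A → ℝ) (w : (G.tensor H).Q1)
      (a : (G.tensor H).A), F = f → w = (u, u') → a = (α, α') → (G.tensor H).op F (w, a) =
      G.op (fun p => H.op (sl G H f p) (u', α')) (u, α) from gen _ _ _ rfl rfl rfl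
  intro F w a hF hw ha
  have hwU : (G.tensor H).wU w = G.wU u * H.wU u' := by
    rw [hw]; exact tensor_wU G H u u'
  rw [op_eq, op_eq, hwU]
  have := tensor_sum G H (fun x => if x.1 = w then PP F x.2.1 x.2.2 a else 0)
  simp only [mul_ite, mul_zero] at this
  rw [div_mul_eq_div_div, div_right_comm]
  congr 1
  refine (congrArg (· / H.wU u') this).trans ?_
  rw [sum_div]
  refine sum_congr rfl fun y _ => ?_
  by_cases h1 : y.1 = u
  · rw [if_pos h1]
    have e : (fun p => H.op (sl G H f p) (u', α')) = fun p =>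
        (∑ z : XX H, (if z.1 = u' then H.μ z else 0) * PP (sl G H f p) z.2.1 z.2.2 α') / H.wU u' := by
      funext p
      rw [op_eq]
      congr 1
      refine sum_congr rfl fun z _ => ?_
      split_ifs <;> simp
    rw [e, PP_lin, ← mul_div_assoc, mul_sum]
    congr 1
    refine sum_congr rfl fun z _ => ?_
    by_cases h2 : z.1 = u'
    · rw [if_pos h2, if_pos (by rw [h1, h2]; exact hw.symm), ← PP_tensor, hF, ha]
      exact mul_assoc _ _ _
    · rw [if_neg h2, if_neg (fun h => h2 (congrArg Prod.snd (h.trans hw)))]; simp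
  · rw [if_neg h1]
    rw [sum_eq_zero, zero_div]
    intro z _
    rw [if_neg (fun h => h1 (congrArg Prod.fst (h.trans hw)))]

lemma tensor_norm (f : (G.Q2 × H.Q2) × (G.A × H.A) → ℝ) :
    (G.tensor H).normUsq ((G.tensor H).op f) =
      ∑ u', H.wU u' * ∑ α', G.normUsq (G.op (fun p => H.op (sl G H f p) (u', α'))) := by
  have : (G.tensor H).normUsq ((G.tensor H).op f) =
      ∑ u, ∑ u', G.wU u * H.wU u' * ∑ α, ∑ α',
        (G.op (fun p => H.op (sl G H f p) (u', α')) (u, α))^2 := by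
    unfold ProjGame.normUsq
    refine (Fintype.sum_prod_type (α₁ := G.Q1) (α₂ := H.Q1) _).trans ?_
    refine sum_congr rfl fun u _ => sum_congr rfl fun u' _ => ?_
    rw [tensor_wU]
    congr 1
    refine (Fintype.sum_prod_type (α₁ := G.A) (α₂ := H.A) _).trans ?_
    refine sum_congr rfl fun α _ => sum_congr rfl fun α' _ => ?_
    rw [tensor_op]
  rw [this, sum_comm]
  refine sum_congr rfl fun u' _ => ?_
  unfold ProjGame.normUsq
  simp only [mul_sum]
  rw [sum_comm (s := (univ : Finset H.A))]
  refine sum_congr rfl fun u _ => ?_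
  rw [sum_comm]
  exact sum_congr rfl fun _ _ => sum_congr rfl fun _ _ => by ring

lemma step (ε : ℝ) (hε : 0 < ε) (hG : ∀ f, G.IsBob f → G.normUsq (G.op f) ≤ 1 - ε)
    (δ' : ℝ) (h0 : 0 ≤ δ') (h16 : δ' ≤ 1/16)
    (hH : ∀ f, H.IsBob f → H.normUsq (H.op f) ≤ 1 - δ')
    (f) (hf : (G.tensor H).IsBob f) :
    let δ := 1 - (G.tensor H).normUsq ((G.tensor H).op f)
    δ' ≤ δ ∧ (1/2400)^2 * ε^2 ≤ δ * (δ - δ') := by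
  intro δ
  -- optimal loss
  let S : Set ℝ := {r | ∃ f, G.IsBob f ∧ r = 1 - G.normUsq (G.op f)}
  have hSne : S.Nonempty := by
    obtain ⟨f0, hf0⟩ := exists_bob G
    exact ⟨_, f0, hf0, rfl⟩
  have hSb : ∀ r ∈ S, ε ≤ r := by
    rintro r ⟨f, hf, rfl⟩
    have := hG f hf
    linarith
  have hεe : ε ≤ sInf S := le_csInf hSne hSb
  set e := sInf S with he
  have he0 : 0 < e := hε.trans_le hεe
  obtain ⟨r, ⟨fs, hfs, rfl⟩, hr⟩ := exists_lt_of_csInf_lt hSne (show sInf S < 2 * e by linarith)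
  have hmin : ∀ f, G.IsBob f → e ≤ 1 - G.normUsq (G.op f) := fun f hf =>
    csInf_le ⟨ε, hSb⟩ ⟨f, hf, rfl⟩
  have hf0 : ∀ p r, 0 ≤ sl G H f p r := fun p r => hf.1 _
  have hbob : ∀ v, H.IsBob (fun r => ∑ β, sl G H f (v, β) r) := by
    intro v
    refine ⟨fun r => sum_nonneg fun β _ => hf0 _ _, fun v' => ?_⟩
    rw [sum_comm]
    have := hf.2 (v, v')
    rw [← this]
    exact (Fintype.sum_prod_type (α₁ := G.A) (α₂ := H.A) (fun b => f ((v, v'), b))).symm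
  have key := core' e δ δ' he0 h0 (fun κ hκ =>
    core (X := XX G) (V := G.Q2) (A := G.A) (I := H.Q1) (J := H.A) (qq G) (qq_nonneg G) G.μ
      (qq_left G) (qq_right G) G.μ_sum (fun x => x.2.1) (fun x => x.2.2) e
      (fun f h1 h2 => by rw [← norm_eq]; exact hmin f ⟨h1, h2⟩)
      fs hfs.1 hfs.2 (by rw [← norm_eq]; exact hr.le)
      H.wU (wU_nonneg H) (wU_sum H)
      (fun u' α' p => H.op (sl G H f p) (u', α'))
      (fun u' α' p => op_nonneg H _ (hf0 p) _)
      (fun u' v => by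
        simp only [op_sum H (fun β => sl G H f (v, β))]
        exact op_sum_le H _ (hbob v) u')
      δ δ'
      (fun v => by
        simp only [op_sum H (fun β => sl G H f (v, β))]
        exact hH _ (hbob v))
      h0 h16
      (by
        simp only [← norm_eq]
        have := tensor_norm G H f
        simp only [δ]
        linarith)
      κ hκ)
  refine ⟨key.1, le_trans ?_ key.2⟩
  gcongr

lemma iter (ε : ℝ) (hε : 0 < ε) (hG : ∀ f, G.IsBob f → G.normUsq (G.op f) ≤ 1 - ε) (n : ℕ) :
    ∀ f, (G.iterTensor n).IsBob f → (G.iterTensor n).normUsq ((G.iterTensor n).op f) ≤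
      1 - min (1/16) (1/2400 * √(n + 1 : ℝ) * ε) := by
  induction n with
  | zero =>
    intro f hf
    have h1 := hG f hf
    change G.normUsq (G.op f) ≤ _
    have h2 : min (1/16) (1/2400 * √((0:ℕ) + 1 : ℝ) * ε) ≤ ε := by
      refine (min_le_right _ _).trans ?_
      simp
      linarith
    linarith
  | succ n ih =>
    intro f hf
    set δ' := min (1/16) (1/2400 * √(n + 1 : ℝ) * ε) with hδ'
    have h0 : 0 ≤ δ' := le_min (by norm_num) (by positivity)
    obtain ⟨k1, k2⟩ := step G (G.iterTensor n) ε hε hG δ' h0 (min_le_left _ _) ih f hf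
    change (G.tensor (G.iterTensor n)).normUsq ((G.tensor (G.iterTensor n)).op f) ≤ _
    set δ := 1 - (G.tensor (G.iterTensor n)).normUsq ((G.tensor (G.iterTensor n)).op f) with hδ
    suffices hs : min (1/16) (1/2400 * √((n+1 : ℕ) + 1 : ℝ) * ε) ≤ δ by linarith
    rcases le_total (1/16) (1/2400 * √(n + 1 : ℝ) * ε) with hc | hc
    · rw [min_eq_left hc] at hδ'
      exact (min_le_left _ _).trans (hδ' ▸ k1)
    · rw [min_eq_right hc] at hδ'
      refine (min_le_right _ _).trans ?_
      refine abs_le_of_sq_le_sq' ?_ (h0.trans k1) |>.2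
      have e1 : (1/2400 * √((n+1 : ℕ) + 1 : ℝ) * ε)^2 = (1/2400)^2 * ((n:ℝ) + 1 + 1) * ε^2 := by
        rw [mul_pow, mul_pow, Real.sq_sqrt (by positivity)]
        push_cast; ring
      have e2 : δ'^2 = (1/2400)^2 * ((n:ℝ) + 1) * ε^2 := by
        rw [hδ', mul_pow, mul_pow, Real.sq_sqrt (by positivity)]
      rw [e1]
      nlinarith

end games

end FR

/-- **Few repetitions.** There are universal constants `c, C > 0` such that for every
projection game `G` with `val(G) ≤ 1 - ε` (`0 < ε < 1`) and every positive `k ≤ c/ε²`,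
`val(G^{⊗k}) ≤ 1 - C·√k·ε`. -/
theorem few_repetitions :
    ∃ c : ℝ, 0 < c ∧ ∃ C : ℝ, 0 < C ∧
      ∀ (G : ProjGame) (ε : ℝ), 0 < ε → ε < 1 → G.val ≤ 1 - ε →
        ∀ k : ℕ, 0 < k → (k : ℝ) ≤ c / ε ^ 2 →
          (G.iterTensor (k - 1)).val ≤ 1 - C * Real.sqrt k * ε := by

  refine ⟨1, one_pos, 1/4800, by norm_num, ?_⟩
  intro G ε hε hε1 hv k hk hkc
  obtain ⟨n, rfl⟩ : ∃ n, k = n + 1 := ⟨k - 1, by omega⟩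
  have hG : ∀ f, G.IsBob f → G.normUsq (G.op f) ≤ 1 - ε := fun f hf =>
    (FR.norm_le_val G f hf).trans hv
  have h := FR.val_le _ _ (FR.iter G ε hε hG n)
  have h1 : √((n + 1 : ℕ) : ℝ) * ε ≤ 1 := by
    rw [le_div_iff₀ (by positivity)] at hkc
    have : (√((n + 1 : ℕ) : ℝ) * ε)^2 ≤ 1 := by
      rw [mul_pow, Real.sq_sqrt (by positivity)]; exact hkc
    exact (abs_le_one_iff_mul_self_le_one.2 (by nlinarith)) |> le_of_abs_le
  push_cast at h1 ⊢
  rw [min_eq_right (by linarith)] at h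
  change (G.iterTensor n).val ≤ _
  linarith
end
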